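/- Let Ω ⊆ ℝ^d be an open convex set, let μ⁻, μ⁺ be absolutely continuous probability measures compactly supported in Ω with densities in L^∞, and let c : Ω × Ω → ℝ be a C² infinitesimally twisted cost. Define the Sinkhorn divergence OT_ε(μ⁻,μ⁺) := v_ε(μ⁻,μ⁺) − (1/2)(v_ε(μ⁻,μ⁻) + v_ε(μ⁺,μ⁺)). Then there exists a constant C ≥ 0 such that for all ε ∈ (0,1): |OT_ε(μ⁻,μ⁺) − (v_0(μ⁻,μ⁺) − (1/2)(v_0(μ⁻,μ⁻) + v_0(μ⁺,μ⁺)))| ≤ C·ε. In particular the ε·log(1/ε) term cancels in the Sinkhorn divergence. -/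

import Mathlib

open MeasureTheory Real Set Filter Classical
open scoped ENNReal NNReal Topology

noncomputable section

/-- Relative entropy (Kullback–Leibler divergence) `Ent(γ | q)`, with values in `EReal`:
it equals `∫ ρ log ρ dq` if `γ = ρ·q` (with `ρ log ρ` integrable) and `+∞` otherwise. -/
def Ent {α : Type*} [MeasurableSpace α] (γ q : Measure α) : EReal :=
  if γ ≪ q ∧ Integrable (fun x => ((γ.rnDeriv q) x).toReal * Real.log ((γ.rnDeriv q) x).toReal) q
  then ((∫ x, ((γ.rnDeriv q) x).toReal * Real.log ((γ.rnDeriv q) x).toReal ∂q : ℝ) : EReal)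
  else ⊤

/-- Entropic optimal transport cost
`v_ε = inf { ∫ c dγ + ε Ent(γ | μ⁻ ⊗ μ⁺) : γ coupling of μ⁻ and μ⁺ }`. -/
def entCost {α β : Type*} [MeasurableSpace α] [MeasurableSpace β]
    (μm : Measure α) (μp : Measure β) (c : α × β → ℝ) (ε : ℝ) : EReal :=
  sInf {v : EReal | ∃ γ : Measure (α × β), IsProbabilityMeasure γ ∧ γ.fst = μm ∧ γ.snd = μp ∧
    v = ((∫ p, c p ∂γ : ℝ) : EReal) + (ε : EReal) * Ent γ (μm.prod μp)}

/-- The cross second derivative matrix `∇²ₓᵧ c(x,y) = (∂²c/∂xᵢ∂yⱼ)ᵢⱼ`. -/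
def crossDeriv {d : ℕ} (c : EuclideanSpace ℝ (Fin d) × EuclideanSpace ℝ (Fin d) → ℝ)
    (x y : EuclideanSpace ℝ (Fin d)) : Matrix (Fin d) (Fin d) ℝ :=
  Matrix.of fun i j =>
    fderiv ℝ (fun y' => fderiv ℝ (fun x' => c (x', y')) x (EuclideanSpace.single i 1)) y
      (EuclideanSpace.single j 1)

/-!
Each of the three entropic costs satisfies `v_ε = v_0 + (d / 2) ε log (1 / ε) + O(ε)`, and the
middle term cancels in the Sinkhorn divergence.

Lower bound. If `φ` and `ψ` are Kantorovich potentials, the Gibbs variational principle for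
`(c - φ - ψ) / ε` bounds `v_ε` below by the dual value minus
`ε log ∫ exp (-(c - φ - ψ) / ε) d(μ ⊗ ν)`. The duality gap `c - φ - ψ` is nonnegative, so the sum of
its values at two points is at least the cross difference of `c`. By twistedness this grows
quadratically along suitable `d`-dimensional slices, whence the integral is `O(ε ^ (d / 2))`.

Upper bound. Replace an optimal plan by its block approximation on cubes of side comparable to
`√ε`, that is, keep the mass of each block and make the plan a multiple of `μ ⊗ ν` there. Its
entropy is at most the logarithm of the number of cubes, `(d / 2) log (1 / ε) + O(1)`. Its cost
increases by `O(ε)` only: `c`-transforms of the potentials are semiconcave, and they absorb the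
first order variation of `c` up to second differences, whose integrals against bounded densities
are `O(ε)`.
-/

/-! ### Couplings -/

section Couplings

variable {α β : Type*} [MeasurableSpace α] [MeasurableSpace β]

/-- A coupling of `μ` and `ν`: a measure on the product with these marginals. -/
structure IsCoupling (γ : Measure (α × β)) (μ : Measure α) (ν : Measure β) : Prop where
  fst_eq : γ.fst = μ
  snd_eq : γ.snd = ν

theorem isCoupling_prod (μ : Measure α) (ν : Measure β) [IsProbabilityMeasure μ]
    [IsProbabilityMeasure ν] : IsCoupling (μ.prod ν) μ ν :=
  ⟨Measure.fst_prod, Measure.snd_prod⟩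

namespace IsCoupling

variable {γ : Measure (α × β)} {μ : Measure α} {ν : Measure β}

theorem isProbabilityMeasure (h : IsCoupling γ μ ν) [IsProbabilityMeasure μ] :
    IsProbabilityMeasure γ :=
  ⟨by rw [← Measure.fst_univ, h.fst_eq, measure_univ]⟩

theorem map {α' β' : Type*} [MeasurableSpace α'] [MeasurableSpace β'] (h : IsCoupling γ μ ν)
    {f : α → α'} {g : β → β'} (hf : Measurable f) (hg : Measurable g) :
    IsCoupling (γ.map (Prod.map f g)) (μ.map f) (ν.map g) where
  fst_eq := by
    rw [← h.fst_eq, Measure.fst, Measure.fst, Measure.map_map measurable_fst (hf.prodMap hg),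
      Measure.map_map hf measurable_fst]
    rfl
  snd_eq := by
    rw [← h.snd_eq, Measure.snd, Measure.snd, Measure.map_map measurable_snd (hf.prodMap hg),
      Measure.map_map hg measurable_snd]
    rfl

theorem integrable_comp_fst (h : IsCoupling γ μ ν) {φ : α → ℝ} (hφ : Integrable φ μ) :
    Integrable (fun p => φ p.1) γ := by
  rw [← h.fst_eq, Measure.fst] at hφ
  exact hφ.comp_measurable measurable_fst

theorem integrable_comp_snd (h : IsCoupling γ μ ν) {ψ : β → ℝ} (hψ : Integrable ψ ν) :
    Integrable (fun p => ψ p.2) γ := by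
  rw [← h.snd_eq, Measure.snd] at hψ
  exact hψ.comp_measurable measurable_snd

theorem integral_comp_fst (h : IsCoupling γ μ ν) {φ : α → ℝ} (hφ : AEStronglyMeasurable φ μ) :
    ∫ p, φ p.1 ∂γ = ∫ x, φ x ∂μ := by
  rw [← h.fst_eq, Measure.fst] at hφ ⊢
  exact (integral_map measurable_fst.aemeasurable hφ).symm

theorem integral_comp_snd (h : IsCoupling γ μ ν) {ψ : β → ℝ} (hψ : AEStronglyMeasurable ψ ν) :
    ∫ p, ψ p.2 ∂γ = ∫ y, ψ y ∂ν := by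
  rw [← h.snd_eq, Measure.snd] at hψ ⊢
  exact (integral_map measurable_snd.aemeasurable hψ).symm

theorem integrable_add (h : IsCoupling γ μ ν) {φ : α → ℝ} {ψ : β → ℝ} (hφ : Integrable φ μ)
    (hψ : Integrable ψ ν) : Integrable (fun p => φ p.1 + ψ p.2) γ :=
  (h.integrable_comp_fst hφ).add (h.integrable_comp_snd hψ)

theorem integral_add (h : IsCoupling γ μ ν) {φ : α → ℝ} {ψ : β → ℝ} (hφ : Integrable φ μ)
    (hψ : Integrable ψ ν) :
    ∫ p, (φ p.1 + ψ p.2) ∂γ = ∫ x, φ x ∂μ + ∫ y, ψ y ∂ν := by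
  rw [MeasureTheory.integral_add (h.integrable_comp_fst hφ) (h.integrable_comp_snd hψ),
    h.integral_comp_fst hφ.aestronglyMeasurable, h.integral_comp_snd hψ.aestronglyMeasurable]

theorem integral_sub_add (h : IsCoupling γ μ ν) {c : α × β → ℝ} {φ : α → ℝ} {ψ : β → ℝ}
    (hc : Integrable c γ) (hφ : Integrable φ μ) (hψ : Integrable ψ ν) :
    ∫ p, (c p - (φ p.1 + ψ p.2)) ∂γ = ∫ p, c p ∂γ - (∫ x, φ x ∂μ + ∫ y, ψ y ∂ν) := by
  rw [integral_sub hc (h.integrable_add hφ hψ), h.integral_add hφ hψ]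

theorem ae_mem_prod (h : IsCoupling γ μ ν) {K : Set α} {L : Set β} (hK : ∀ᵐ x ∂μ, x ∈ K)
    (hL : ∀ᵐ y ∂ν, y ∈ L) : ∀ᵐ p ∂γ, p ∈ K ×ˢ L := by
  rw [← h.fst_eq, Measure.fst] at hK
  rw [← h.snd_eq, Measure.snd] at hL
  filter_upwards [ae_of_ae_map measurable_fst.aemeasurable hK,
    ae_of_ae_map measurable_snd.aemeasurable hL] with p hp hp'
  exact ⟨hp, hp'⟩

end IsCoupling

end Couplings

theorem integrable_of_continuousOn_of_ae_mem {α : Type*} [TopologicalSpace α] [T2Space α]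
    [MeasurableSpace α] [BorelSpace α] {μ : Measure α} [IsFiniteMeasure μ] {K : Set α}
    (hK : IsCompact K) (hμ : ∀ᵐ x ∂μ, x ∈ K) {f : α → ℝ} (hf : ContinuousOn f K) :
    Integrable f μ := by
  rw [← Measure.restrict_eq_self_of_ae_mem hμ]
  exact hf.integrableOn_compact hK

/-! ### Kantorovich duality -/

theorem exists_linearMap_le_sublinear_eq {V : Type*} [AddCommGroup V] [Module ℝ V] (N : V → ℝ)
    (N_hom : ∀ r : ℝ, 0 < r → ∀ x, N (r • x) = r * N x) (N_add : ∀ x y, N (x + y) ≤ N x + N y)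
    (x₀ : V) : ∃ g : V →ₗ[ℝ] ℝ, g x₀ = N x₀ ∧ ∀ x, g x ≤ N x := by
  have N_zero : N 0 = 0 := by
    have h := N_hom 2 two_pos 0
    rw [smul_zero] at h
    linarith
  have hle : ∀ r : ℝ, r * N x₀ ≤ N (r • x₀) := by
    intro r
    rcases lt_trichotomy r 0 with hr | rfl | hr
    · have hsum := N_add (r • x₀) (-r • x₀)
      rw [← add_smul, add_neg_cancel, zero_smul, N_zero, N_hom (-r) (neg_pos.2 hr)] at hsum
      linarith
    · simp [N_zero]
    · exact (N_hom r hr x₀).ge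
  have hwd : ∀ r : ℝ, r • x₀ = 0 → RingHom.id ℝ r • N x₀ = 0 := by
    intro r hr
    rcases smul_eq_zero.1 hr with rfl | rfl <;> simp [N_zero]
  let f₀ : V →ₗ.[ℝ] ℝ := LinearPMap.mkSpanSingleton' x₀ (N x₀) hwd
  have hf₀ : ∀ (r : ℝ) (hr : r • x₀ ∈ f₀.domain), f₀ ⟨r • x₀, hr⟩ = r * N x₀ := fun r hr =>
    LinearPMap.mkSpanSingleton'_apply x₀ (N x₀) hwd r hr
  obtain ⟨g, hgf, hgN⟩ := exists_extension_of_le_sublinear f₀ N N_hom N_add (by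
    rintro ⟨x, hx⟩
    obtain ⟨r, rfl⟩ := Submodule.mem_span_singleton.1 hx
    exact (hf₀ r hx).le.trans (hle r))
  refine ⟨g, ?_, hgN⟩
  have hg₁ := (hgf ⟨(1 : ℝ) • x₀, Submodule.mem_span_singleton.2 ⟨1, rfl⟩⟩).trans (hf₀ 1 _)
  simpa using hg₁

theorem exists_finiteMeasure_integral_eq {X : Type*} [TopologicalSpace X] [T2Space X]
    [CompactSpace X] [MeasurableSpace X] [BorelSpace X] (g : C(X, ℝ) →ₗ[ℝ] ℝ)
    (hg : ∀ f : C(X, ℝ), 0 ≤ f → 0 ≤ g f) :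
    ∃ γ : Measure X, IsFiniteMeasure γ ∧ ∀ f : C(X, ℝ), ∫ x, f x ∂γ = g f := by
  let G : CompactlySupportedContinuousMap X ℝ →ₗ[ℝ] ℝ :=
    { toFun := fun f => g f.toContinuousMap
      map_add' := fun f f' => by rw [← map_add]; rfl
      map_smul' := fun r f => by rw [RingHom.id_apply, ← map_smul]; rfl }
  let Λ : CompactlySupportedContinuousMap X ℝ →ₚ[ℝ] ℝ :=
    PositiveLinearMap.mk₀ G fun f hf => hg _ fun x => hf x
  exact ⟨RealRMK.rieszMeasure Λ, inferInstance, fun f =>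
    RealRMK.integral_rieszMeasure Λ (CompactlySupportedContinuousMap.continuousMapEquiv f)⟩

section Duality

theorem integrable_of_continuousMap {X : Type*} [TopologicalSpace X] [T2Space X] [CompactSpace X]
    [MeasurableSpace X] [BorelSpace X] (μ : Measure X) [IsFiniteMeasure μ] (f : C(X, ℝ)) :
    Integrable f μ :=
  integrable_of_continuousOn_of_ae_mem isCompact_univ (ae_of_all μ mem_univ)
    f.continuous.continuousOn

variable {X Y : Type*} [MetricSpace X] [CompactSpace X] [MeasurableSpace X]
  [MetricSpace Y] [CompactSpace Y] [MeasurableSpace Y]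

/-- The least value of `∫ φ dμ + ∫ ψ dν` over continuous `φ`, `ψ` with `h ≤ φ ⊕ ψ`, that is, the
dual value of the problem of maximizing `∫ h dγ` over the couplings `γ` of `μ` and `ν`. -/
def dualValue (μ : Measure X) (ν : Measure Y) (h : C(X × Y, ℝ)) : ℝ :=
  sInf {r | ∃ (φ : C(X, ℝ)) (ψ : C(Y, ℝ)), (∀ x y, h (x, y) ≤ φ x + ψ y) ∧
    r = ∫ x, φ x ∂μ + ∫ y, ψ y ∂ν}

theorem exists_lt_dualValue_add (μ : Measure X) (ν : Measure Y) (h : C(X × Y, ℝ)) {η : ℝ}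
    (hη : 0 < η) :
    ∃ (φ : C(X, ℝ)) (ψ : C(Y, ℝ)), (∀ x y, h (x, y) ≤ φ x + ψ y) ∧
      ∫ x, φ x ∂μ + ∫ y, ψ y ∂ν < dualValue μ ν h + η := by
  have hfeas : ∀ x y, h (x, y) ≤ ContinuousMap.const X ‖h‖ x + (0 : C(Y, ℝ)) y := fun x y => by
    simpa using h.apply_le_norm (x, y)
  have hlt := lt_add_of_pos_right (dualValue μ ν h) hη
  obtain ⟨r, ⟨φ, ψ, hle, rfl⟩, hr⟩ := exists_lt_of_csInf_lt (by exact ⟨_, _, _, hfeas, rfl⟩) hlt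
  exact ⟨φ, ψ, hle, hr⟩

variable [BorelSpace X] [BorelSpace Y] (μ : Measure X) (ν : Measure Y)
  [IsProbabilityMeasure μ] [IsProbabilityMeasure ν]

theorem dualValue_le {h : C(X × Y, ℝ)} {φ : C(X, ℝ)} {ψ : C(Y, ℝ)}
    (hle : ∀ x y, h (x, y) ≤ φ x + ψ y) :
    dualValue μ ν h ≤ ∫ x, φ x ∂μ + ∫ y, ψ y ∂ν := by
  refine csInf_le ⟨∫ p, h p ∂μ.prod ν, ?_⟩ ⟨φ, ψ, hle, rfl⟩
  rintro r ⟨φ', ψ', hle', rfl⟩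
  have hφ' := integrable_of_continuousMap μ φ'
  have hψ' := integrable_of_continuousMap ν ψ'
  rw [← (isCoupling_prod μ ν).integral_add hφ' hψ']
  exact integral_mono (integrable_of_continuousMap _ h)
    ((isCoupling_prod μ ν).integrable_add hφ' hψ') fun p => hle' p.1 p.2

theorem dualValue_add_le (h h' : C(X × Y, ℝ)) :
    dualValue μ ν (h + h') ≤ dualValue μ ν h + dualValue μ ν h' := by
  refine le_of_forall_pos_le_add fun η hη => ?_
  obtain ⟨φ, ψ, hle, hlt⟩ := exists_lt_dualValue_add μ ν h (half_pos hη)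
  obtain ⟨φ', ψ', hle', hlt'⟩ := exists_lt_dualValue_add μ ν h' (half_pos hη)
  have hsum := dualValue_le μ ν (h := h + h') (φ := φ + φ') (ψ := ψ + ψ') fun x y => by
    simp only [ContinuousMap.add_apply]
    linarith [hle x y, hle' x y]
  simp only [ContinuousMap.add_apply] at hsum
  rw [integral_add (integrable_of_continuousMap μ φ) (integrable_of_continuousMap μ φ'),
    integral_add (integrable_of_continuousMap ν ψ) (integrable_of_continuousMap ν ψ')] at hsum
  linarith

theorem dualValue_smul_le {r : ℝ} (hr : 0 < r) (h : C(X × Y, ℝ)) :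
    dualValue μ ν (r • h) ≤ r * dualValue μ ν h := by
  refine le_of_forall_pos_le_add fun η hη => ?_
  obtain ⟨φ, ψ, hle, hlt⟩ := exists_lt_dualValue_add μ ν h (div_pos hη hr)
  calc dualValue μ ν (r • h)
      ≤ ∫ x, (r • φ) x ∂μ + ∫ y, (r • ψ) y ∂ν := dualValue_le μ ν fun x y => by
        simpa [mul_add] using mul_le_mul_of_nonneg_left (hle x y) hr.le
    _ = r * (∫ x, φ x ∂μ + ∫ y, ψ y ∂ν) := by
        simp only [ContinuousMap.smul_apply, smul_eq_mul, integral_const_mul, mul_add]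
    _ ≤ r * (dualValue μ ν h + η / r) := by gcongr
    _ = r * dualValue μ ν h + η := by field_simp

theorem dualValue_smul {r : ℝ} (hr : 0 < r) (h : C(X × Y, ℝ)) :
    dualValue μ ν (r • h) = r * dualValue μ ν h := by
  refine le_antisymm (dualValue_smul_le μ ν hr h) ?_
  have hinv := dualValue_smul_le μ ν (inv_pos.2 hr) (r • h)
  rwa [inv_smul_smul₀ hr.ne', le_inv_mul_iff₀ hr] at hinv

theorem exists_isCoupling_integral_eq {g : C(X × Y, ℝ) →ₗ[ℝ] ℝ} (hg : ∀ h, g h ≤ dualValue μ ν h) :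
    ∃ γ : Measure (X × Y), IsCoupling γ μ ν ∧ ∀ h : C(X × Y, ℝ), ∫ p, h p ∂γ = g h := by
  have hle : ∀ (φ : C(X, ℝ)) (ψ : C(Y, ℝ)), g (φ.comp .fst + ψ.comp .snd)
      ≤ ∫ x, φ x ∂μ + ∫ y, ψ y ∂ν := fun φ ψ => (hg _).trans (dualValue_le μ ν fun x y => by simp)
  have heq : ∀ (φ : C(X, ℝ)) (ψ : C(Y, ℝ)), g (φ.comp .fst + ψ.comp .snd)
      = ∫ x, φ x ∂μ + ∫ y, ψ y ∂ν := by
    refine fun φ ψ => le_antisymm (hle φ ψ) ?_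
    have hneg : (-φ).comp .fst + (-ψ).comp .snd = -(φ.comp .fst + ψ.comp (.snd : C(X × Y, Y))) := by
      ext p
      simp [add_comm]
    have hle' := hle (-φ) (-ψ)
    simp only [hneg, map_neg, ContinuousMap.neg_apply, integral_neg] at hle'
    linarith
  obtain ⟨γ, hγ, hInt⟩ := exists_finiteMeasure_integral_eq g fun f hf => by
    have hneg := (hg (-f)).trans
      (dualValue_le μ ν (φ := 0) (ψ := 0) fun x y => by simpa using hf (x, y))
    simpa using hneg
  refine ⟨γ, ⟨?_, ?_⟩, hInt⟩
  · refine ext_of_forall_integral_eq_of_IsFiniteMeasure fun f => ?_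
    rw [Measure.fst, integral_map measurable_fst.aemeasurable f.continuous.aestronglyMeasurable]
    simpa using (hInt _).trans (heq f.toContinuousMap 0)
  · refine ext_of_forall_integral_eq_of_IsFiniteMeasure fun f => ?_
    rw [Measure.snd, integral_map measurable_snd.aemeasurable f.continuous.aestronglyMeasurable]
    simpa using (hInt _).trans (heq 0 f.toContinuousMap)

theorem exists_isCoupling_forall_integral_le_dual_add (c : C(X × Y, ℝ)) :
    ∃ γ : Measure (X × Y), IsCoupling γ μ ν ∧ ∀ η : ℝ, 0 < η →
      ∃ (φ : C(X, ℝ)) (ψ : C(Y, ℝ)), (∀ x y, φ x + ψ y ≤ c (x, y)) ∧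
        ∫ p, c p ∂γ ≤ ∫ x, φ x ∂μ + ∫ y, ψ y ∂ν + η := by
  obtain ⟨g, hgc, hg⟩ := exists_linearMap_le_sublinear_eq (dualValue μ ν)
    (fun r hr h => dualValue_smul μ ν hr h) (dualValue_add_le μ ν) (-c)
  obtain ⟨γ, hγ, hInt⟩ := exists_isCoupling_integral_eq μ ν hg
  refine ⟨γ, hγ, fun η hη => ?_⟩
  obtain ⟨φ, ψ, hle, hlt⟩ := exists_lt_dualValue_add μ ν (-c) hη
  refine ⟨-φ, -ψ, fun x y => ?_, ?_⟩
  · have hxy := hle x y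
    simp only [ContinuousMap.neg_apply] at hxy ⊢
    linarith
  · rw [map_neg] at hgc
    simp only [ContinuousMap.neg_apply, integral_neg, hInt c]
    linarith

end Duality

/-- Kantorovich potentials for `c` on `K × L`: continuous on `K` and `L` respectively, and
satisfying the dual constraint there. -/
structure IsDualFeasible {E F : Type*} [TopologicalSpace E] [TopologicalSpace F]
    (c : E × F → ℝ) (K : Set E) (L : Set F) (φ : E → ℝ) (ψ : F → ℝ) : Prop where
  continuousOn_left : ContinuousOn φ K
  continuousOn_right : ContinuousOn ψ L
  add_le : ∀ x ∈ K, ∀ y ∈ L, φ x + ψ y ≤ c (x, y)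

section CompactSupport

section Subtype

variable {α : Type*} [MeasurableSpace α] {K : Set α} {μ : Measure α}

theorem map_comap_subtype_val_of_ae_mem (hK : MeasurableSet K) (hμ : ∀ᵐ x ∂μ, x ∈ K) :
    (μ.comap (Subtype.val : K → α)).map Subtype.val = μ := by
  rw [(MeasurableEmbedding.subtype_coe hK).map_comap, Subtype.range_coe,
    Measure.restrict_eq_self_of_ae_mem hμ]

theorem isProbabilityMeasure_comap_subtype_val [IsProbabilityMeasure μ] (hK : MeasurableSet K)
    (hμ : ∀ᵐ x ∂μ, x ∈ K) : IsProbabilityMeasure (μ.comap (Subtype.val : K → α)) := by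
  have : IsProbabilityMeasure ((μ.comap (Subtype.val : K → α)).map Subtype.val) := by
    rwa [map_comap_subtype_val_of_ae_mem hK hμ]
  exact Measure.isProbabilityMeasure_of_map Subtype.val

theorem integral_extend_subtype_val (hK : MeasurableSet K) (hμ : ∀ᵐ x ∂μ, x ∈ K) (f : K → ℝ) :
    ∫ x, Function.extend Subtype.val f 0 x ∂μ = ∫ x, f x ∂(μ.comap (Subtype.val : K → α)) := by
  conv_lhs => rw [← map_comap_subtype_val_of_ae_mem hK hμ]
  rw [(MeasurableEmbedding.subtype_coe hK).integral_map]
  simp only [Subtype.val_injective.extend_apply]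

theorem continuousOn_extend_subtype_val {E : Type*} [TopologicalSpace E] {K : Set E} {f : K → ℝ}
    (hf : Continuous f) : ContinuousOn (Function.extend Subtype.val f 0) K := by
  rw [continuousOn_iff_continuous_domRestrict]
  convert! hf using 1
  ext x
  exact Subtype.val_injective.extend_apply _ _ _

end Subtype

variable {E F : Type*} [MetricSpace E] [SecondCountableTopology E] [MeasurableSpace E]
  [BorelSpace E] [MetricSpace F] [MeasurableSpace F] [BorelSpace F]
variable {K : Set E} {L : Set F} {μ : Measure E} {ν : Measure F} [IsProbabilityMeasure μ]
  {c : E × F → ℝ}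

theorem IsCoupling.integrable_of_continuous {γ : Measure (E × F)} (hγ : IsCoupling γ μ ν)
    (hK : IsCompact K) (hL : IsCompact L) (hμ : ∀ᵐ x ∂μ, x ∈ K) (hν : ∀ᵐ y ∂ν, y ∈ L)
    (hc : Continuous c) : Integrable c γ :=
  have := hγ.isProbabilityMeasure
  integrable_of_continuousOn_of_ae_mem (hK.prod hL) (hγ.ae_mem_prod hμ hν) hc.continuousOn

theorem IsDualFeasible.integral_add_le {φ : E → ℝ} {ψ : F → ℝ} (h : IsDualFeasible c K L φ ψ)
    [IsProbabilityMeasure ν] {γ : Measure (E × F)} (hγ : IsCoupling γ μ ν) (hK : IsCompact K)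
    (hL : IsCompact L) (hμ : ∀ᵐ x ∂μ, x ∈ K) (hν : ∀ᵐ y ∂ν, y ∈ L) (hc : Continuous c) :
    ∫ x, φ x ∂μ + ∫ y, ψ y ∂ν ≤ ∫ p, c p ∂γ := by
  rw [← sub_nonneg, ← hγ.integral_sub_add (hγ.integrable_of_continuous hK hL hμ hν hc)
    (integrable_of_continuousOn_of_ae_mem hK hμ h.continuousOn_left)
    (integrable_of_continuousOn_of_ae_mem hL hν h.continuousOn_right)]
  exact integral_nonneg_of_ae ((hγ.ae_mem_prod hμ hν).mono fun p hp =>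
    sub_nonneg.2 (h.add_le _ hp.1 _ hp.2))

theorem exists_isCoupling_forall_integral_le_isDualFeasible_add [IsProbabilityMeasure ν]
    (hK : IsCompact K) (hL : IsCompact L) (hμ : ∀ᵐ x ∂μ, x ∈ K) (hν : ∀ᵐ y ∂ν, y ∈ L)
    (hc : Continuous c) :
    ∃ γ : Measure (E × F), IsCoupling γ μ ν ∧ ∀ η : ℝ, 0 < η →
      ∃ φ ψ, IsDualFeasible c K L φ ψ ∧ ∫ p, c p ∂γ ≤ ∫ x, φ x ∂μ + ∫ y, ψ y ∂ν + η := by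
  have := isCompact_iff_compactSpace.1 hK
  have := isCompact_iff_compactSpace.1 hL
  have := isProbabilityMeasure_comap_subtype_val hK.measurableSet hμ
  have := isProbabilityMeasure_comap_subtype_val hL.measurableSet hν
  obtain ⟨γ, hγ, hdual⟩ := exists_isCoupling_forall_integral_le_dual_add
    (μ.comap (Subtype.val : K → E)) (ν.comap (Subtype.val : L → F))
    ⟨fun p => c (p.1, p.2), by fun_prop⟩
  have hγ' := hγ.map measurable_subtype_coe measurable_subtype_coe
  rw [map_comap_subtype_val_of_ae_mem hK.measurableSet hμ,
    map_comap_subtype_val_of_ae_mem hL.measurableSet hν] at hγ'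
  refine ⟨_, hγ', fun η hη => ?_⟩
  obtain ⟨φ, ψ, hle, hInt⟩ := hdual η hη
  refine ⟨Function.extend Subtype.val φ 0, Function.extend Subtype.val ψ 0,
    ⟨continuousOn_extend_subtype_val φ.continuous, continuousOn_extend_subtype_val ψ.continuous,
      fun x hx y hy => ?_⟩, ?_⟩
  · rw [Subtype.val_injective.extend_apply _ _ ⟨x, hx⟩,
      Subtype.val_injective.extend_apply _ _ ⟨y, hy⟩]
    exact hle ⟨x, hx⟩ ⟨y, hy⟩
  · rw [integral_extend_subtype_val hK.measurableSet hμ,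
      integral_extend_subtype_val hL.measurableSet hν, integral_map (by fun_prop)
      hc.aestronglyMeasurable]
    exact hInt

end CompactSupport

/-! ### Relative entropy and the entropic cost -/

open InformationTheory

section Entropy

variable {α β : Type*} [MeasurableSpace α] [MeasurableSpace β]

theorem Ent_eq_klDiv (γ q : Measure α) [IsProbabilityMeasure γ] [IsProbabilityMeasure q] :
    Ent γ q = (klDiv γ q : EReal) := by
  unfold Ent
  by_cases hγ : γ ≪ q
  · by_cases hInt : Integrable (llr γ q) γ
    · rw [if_pos ⟨hγ, (integrable_rnDeriv_mul_log_iff hγ).2 hInt⟩, integral_rnDeriv_mul_log hγ,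
        ← toReal_klDiv_of_measure_eq hγ (by simp), EReal.coe_ennreal_toReal (klDiv_ne_top hγ hInt)]
    · rw [if_neg fun h => hInt ((integrable_rnDeriv_mul_log_iff hγ).1 h.2),
        klDiv_of_not_integrable hInt, EReal.coe_ennreal_top]
  · rw [if_neg fun h => hγ h.1, klDiv_of_not_ac hγ, EReal.coe_ennreal_top]

theorem integral_le_toReal_klDiv_add_log_integral_exp {γ q : Measure α} [IsProbabilityMeasure γ]
    [IsProbabilityMeasure q] (hfin : klDiv γ q ≠ ∞) {f : α → ℝ} (hf : Integrable f γ)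
    (hexp : Integrable (fun x => rexp (f x)) q) :
    ∫ x, f x ∂γ ≤ (klDiv γ q).toReal + log (∫ x, rexp (f x) ∂q) := by
  obtain ⟨hγ, hInt⟩ := klDiv_ne_top_iff.1 hfin
  have := isProbabilityMeasure_tilted hexp
  have hnonneg := integral_llr_add_sub_measure_univ_nonneg
    (hγ.trans (absolutelyContinuous_tilted hexp)) (integrable_llr_tilted_right hγ hf hInt hexp)
  simp only [probReal_univ, add_sub_cancel_right] at hnonneg
  rw [integral_llr_tilted_right hγ hf hexp hInt,
    ← toReal_klDiv_of_measure_eq hγ (by simp)] at hnonneg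
  linarith

variable {μ : Measure α} {ν : Measure β} {c : α × β → ℝ} {ε : ℝ}

theorem entCost_congr {K : Set α} {L : Set β} (hμ : ∀ᵐ x ∂μ, x ∈ K) (hν : ∀ᵐ y ∂ν, y ∈ L)
    {c' : α × β → ℝ} (hcc' : EqOn c c' (K ×ˢ L)) : entCost μ ν c ε = entCost μ ν c' ε := by
  have hInt : ∀ γ : Measure (α × β), γ.fst = μ → γ.snd = ν → ∫ p, c p ∂γ = ∫ p, c' p ∂γ :=
    fun γ h₁ h₂ => integral_congr_ae <| by
      filter_upwards [IsCoupling.ae_mem_prod ⟨h₁, h₂⟩ hμ hν] with p hp using hcc' hp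
  unfold entCost
  congr 1 with v
  refine exists_congr fun γ => and_congr_right fun _ => and_congr_right fun h₁ =>
    and_congr_right fun h₂ => ?_
  rw [hInt γ h₁ h₂]

theorem entCost_zero [IsProbabilityMeasure μ] {γ₀ : Measure (α × β)} (hγ₀ : IsCoupling γ₀ μ ν)
    (hmin : ∀ γ, IsCoupling γ μ ν → ∫ p, c p ∂γ₀ ≤ ∫ p, c p ∂γ) :
    entCost μ ν c 0 = ((∫ p, c p ∂γ₀ : ℝ) : EReal) := by
  refine le_antisymm
    (sInf_le ⟨γ₀, hγ₀.isProbabilityMeasure, hγ₀.fst_eq, hγ₀.snd_eq, by simp⟩) (le_sInf ?_)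
  rintro v ⟨γ, -, h₁, h₂, rfl⟩
  simpa using hmin γ ⟨h₁, h₂⟩

variable [IsProbabilityMeasure μ] [IsProbabilityMeasure ν]

theorem entCost_le {γ : Measure (α × β)} (hγ : IsCoupling γ μ ν)
    (hfin : klDiv γ (μ.prod ν) ≠ ∞) :
    entCost μ ν c ε
      ≤ ((∫ p, c p ∂γ + ε * (klDiv γ (μ.prod ν)).toReal : ℝ) : EReal) := by
  have := hγ.isProbabilityMeasure
  refine sInf_le ⟨γ, this, hγ.fst_eq, hγ.snd_eq, ?_⟩
  rw [Ent_eq_klDiv, EReal.coe_add, EReal.coe_mul, EReal.coe_ennreal_toReal hfin]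

theorem le_entCost (hε : 0 < ε) {a : ℝ}
    (hle : ∀ γ, IsCoupling γ μ ν → klDiv γ (μ.prod ν) ≠ ∞ →
      a ≤ ∫ p, c p ∂γ + ε * (klDiv γ (μ.prod ν)).toReal) :
    (a : EReal) ≤ entCost μ ν c ε := by
  refine le_sInf ?_
  rintro v ⟨γ, hγ, h₁, h₂, rfl⟩
  rw [Ent_eq_klDiv]
  by_cases hfin : klDiv γ (μ.prod ν) = ∞
  · rw [hfin, EReal.coe_ennreal_top, EReal.coe_mul_top_of_pos hε, EReal.coe_add_top]
    exact le_top
  · rw [← EReal.coe_ennreal_toReal hfin]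
    exact_mod_cast hle γ ⟨h₁, h₂⟩ hfin

end Entropy

/-! ### Laplace bounds for twisted costs -/

section MixedDerivative

variable {E F : Type*} [NormedAddCommGroup E] [NormedSpace ℝ E] [NormedAddCommGroup F]
  [NormedSpace ℝ F]

/-- The mixed second derivative of `c` at `p`, as the bilinear form sending `(k, h)` to the
derivative of `c` in the direction `h` of the first and `k` of the second variable. -/
def mixedFDeriv (c : E × F → ℝ) (p : E × F) : F →L[ℝ] E →L[ℝ] ℝ :=
  (fderiv ℝ (fderiv ℝ c) p).bilinearComp (.inr ℝ E F) (.inl ℝ E F)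

/-- The cross difference of `c` at the pairs `p` and `q`: what is lost by exchanging their second
entries. -/
def crossDiff (c : E × F → ℝ) (p q : E × F) : ℝ :=
  c p + c q - c (p.1, q.2) - c (q.1, p.2)

theorem exists_ball_norm_fderiv_comp_inl_sub_le {c : E × F → ℝ} (hc : ContDiff ℝ 2 c) (p₀ : E × F)
    {κ : ℝ} (hκ : 0 < κ) :
    ∃ r > 0, ∀ x y y', (x, y) ∈ Metric.ball p₀ r → (x, y') ∈ Metric.ball p₀ r →
      ‖(fderiv ℝ c (x, y) - fderiv ℝ c (x, y')).comp (.inl ℝ E F) - mixedFDeriv c p₀ (y - y')‖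
        ≤ κ * ‖y - y'‖ := by
  have hstrict : HasStrictFDerivAt (fderiv ℝ c) (fderiv ℝ (fderiv ℝ c) p₀) p₀ :=
    (hc.fderiv_right (m := 1) (by norm_num)).contDiffAt.hasStrictFDerivAt one_ne_zero
  obtain ⟨r, hr, happrox⟩ := Metric.eventually_nhds_iff_ball.1 (hstrict.isLittleO.def hκ)
  refine ⟨r, hr, fun x y y' hy hy' => ContinuousLinearMap.opNorm_le_bound _ (by positivity) ?_⟩
  intro h
  have hle := happrox ((x, y), (x, y')) (by rw [← ball_prod_same]; exact ⟨hy, hy'⟩)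
  have hnorm : ‖((x, y) - (x, y') : E × F)‖ = ‖y - y'‖ := by simp [Prod.norm_def]
  rw [hnorm] at hle
  have hop := ContinuousLinearMap.le_of_opNorm_le _ hle (h, (0 : F))
  simpa [mixedFDeriv, Prod.norm_def, -map_sub] using hop

theorem exists_ball_abs_crossDiff_sub_mixedFDeriv_le {c : E × F → ℝ} (hc : ContDiff ℝ 2 c)
    (p₀ : E × F) {κ : ℝ} (hκ : 0 < κ) :
    ∃ r > 0, ∀ p ∈ Metric.ball p₀ r, ∀ q ∈ Metric.ball p₀ r,
      |crossDiff c p q - mixedFDeriv c p₀ (p.2 - q.2) (p.1 - q.1)|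
        ≤ κ * ‖p.2 - q.2‖ * ‖p.1 - q.1‖ := by
  obtain ⟨r, hr, hderiv⟩ := exists_ball_norm_fderiv_comp_inl_sub_le hc p₀ hκ
  refine ⟨r, hr, fun p hp q hq => ?_⟩
  rw [← ball_prod_same] at hp hq
  have hpartial : ∀ z y, HasFDerivAt (fun z => c (z, y))
      ((fderiv ℝ c (z, y)).comp (.inl ℝ E F)) z := fun z y =>
    (hc.differentiable two_ne_zero (z, y)).hasFDerivAt.comp z (hasFDerivAt_prodMk_left z y)
  have hmean := (convex_ball p₀.1 r).norm_image_sub_le_of_norm_hasFDerivWithin_le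
    (fun z _ => (((hpartial z p.2).sub (hpartial z q.2)).sub
      (mixedFDeriv c p₀ (p.2 - q.2)).hasFDerivAt).hasFDerivWithinAt)
    (fun z hz => by
      simpa using hderiv z p.2 q.2 (by rw [← ball_prod_same]; exact ⟨hz, hp.2⟩)
        (by rw [← ball_prod_same]; exact ⟨hz, hq.2⟩)) hq.1 hp.1
  rw [Real.norm_eq_abs] at hmean
  convert hmean using 2
  simp only [crossDiff, Pi.sub_apply, map_sub]
  ring

theorem mem_closedBall_of_add_mem_ball (T : F →L[ℝ] E) {p₀ : E × F} {r : ℝ} {v : E} {y : F}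
    (h : (v + T y, y) ∈ Metric.ball p₀ r) :
    v ∈ Metric.closedBall (p₀.1 - T p₀.2) ((1 + ‖T‖) * r) := by
  rw [← ball_prod_same] at h
  have h₁ := (mem_ball_iff_norm.1 h.1).le
  have h₂ := T.le_of_opNorm_le_of_le le_rfl (mem_ball_iff_norm.1 h.2).le
  rw [mem_closedBall_iff_norm]
  calc ‖v - (p₀.1 - T p₀.2)‖ = ‖(v + T y - p₀.1) - T (y - p₀.2)‖ := by
        rw [map_sub]
        congr 1
        abel
    _ ≤ r + ‖T‖ * r := (norm_sub_le _ _).trans (add_le_add h₁ h₂)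
    _ = (1 + ‖T‖) * r := by ring

end MixedDerivative

theorem IsDualFeasible.continuousOn_exp {E F : Type*} [TopologicalSpace E] [TopologicalSpace F]
    {c : E × F → ℝ} {K : Set E} {L : Set F} {φ : E → ℝ} {ψ : F → ℝ}
    (h : IsDualFeasible c K L φ ψ) (hc : Continuous c) (ε : ℝ) :
    ContinuousOn (fun p => rexp (-(c p - (φ p.1 + ψ p.2)) / ε)) (K ×ˢ L) := by
  have hφ : ContinuousOn (fun p : E × F => φ p.1) (K ×ˢ L) :=
    h.continuousOn_left.comp continuousOn_fst fun p hp => hp.1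
  have hψ : ContinuousOn (fun p : E × F => ψ p.2) (K ×ˢ L) :=
    h.continuousOn_right.comp continuousOn_snd fun p hp => hp.2
  exact ((hc.continuousOn.sub (hφ.add hψ)).neg.div_const ε).rexp

section Laplace

variable {E : Type*} [NormedAddCommGroup E] [InnerProductSpace ℝ E] [FiniteDimensional ℝ E]

theorem exists_mul_sq_norm_le_of_injective {B : E →L[ℝ] E →L[ℝ] ℝ} (hB : Function.Injective B) :
    ∃ (T : E →L[ℝ] E) (a : ℝ), 0 < a ∧ ∀ k, a * ‖k‖ ^ 2 ≤ B k (T k) := by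
  let T : E →L[ℝ] E := InnerProductSpace.continuousLinearMapOfBilin (𝕜 := ℝ) B
  have hT : ∀ k h, inner ℝ (T k) h = B k h :=
    InnerProductSpace.continuousLinearMapOfBilin_apply (𝕜 := ℝ) B
  have hker : T.toLinearMap.ker = ⊥ := LinearMap.ker_eq_bot'.2 fun k hk =>
    (map_eq_zero_iff B hB).1 <| by
      ext h
      rw [← hT k h, show T k = 0 from hk, inner_zero_left, zero_apply]
  obtain ⟨b, hb, hanti⟩ := T.toLinearMap.exists_antilipschitzWith hker
  refine ⟨T, ((b : ℝ) ^ 2)⁻¹, by positivity, fun k => ?_⟩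
  have hk : ‖k‖ ≤ b * ‖T k‖ := by simpa using hanti.le_mul_dist k 0
  rw [← hT, real_inner_self_eq_norm_sq, inv_mul_le_iff₀ (by positivity), ← mul_pow]
  gcongr

/-- Minty's trick: after the linear change of variables `x = v + T y`, twistedness becomes strict
monotonicity, so two pairs on a common slice `v` have a quadratic cross difference. -/
theorem exists_ball_mul_sq_norm_le_crossDiff {c : E × E → ℝ} (hc : ContDiff ℝ 2 c) {p₀ : E × E}
    (hinj : Function.Injective (mixedFDeriv c p₀)) :
    ∃ (T : E →L[ℝ] E) (a r : ℝ), 0 < a ∧ 0 < r ∧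
      ∀ p ∈ Metric.ball p₀ r, ∀ q ∈ Metric.ball p₀ r, p.1 - q.1 = T (p.2 - q.2) →
        a * ‖p.2 - q.2‖ ^ 2 ≤ crossDiff c p q := by
  obtain ⟨T, a, ha, hcoer⟩ := exists_mul_sq_norm_le_of_injective hinj
  obtain ⟨r, hr, happrox⟩ := exists_ball_abs_crossDiff_sub_mixedFDeriv_le hc p₀
    (κ := a / (2 * (‖T‖ + 1))) (by positivity)
  refine ⟨T, a / 2, r, half_pos ha, hr, fun p hp q hq hpq => ?_⟩
  have hle := (abs_le.1 (happrox p hp q hq)).1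
  rw [hpq] at hle
  have herr : a / (2 * (‖T‖ + 1)) * ‖p.2 - q.2‖ * ‖T (p.2 - q.2)‖ ≤ a / 2 * ‖p.2 - q.2‖ ^ 2 :=
    calc a / (2 * (‖T‖ + 1)) * ‖p.2 - q.2‖ * ‖T (p.2 - q.2)‖
        ≤ a / (2 * (‖T‖ + 1)) * ‖p.2 - q.2‖ * ((‖T‖ + 1) * ‖p.2 - q.2‖) := by
          gcongr
          exact T.le_of_opNorm_le (by linarith) _
      _ = a / 2 * ‖p.2 - q.2‖ ^ 2 := by field_simp
  linarith [hcoer (p.2 - q.2)]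

variable [MeasurableSpace E] [BorelSpace E]

theorem lintegral_exp_neg_mul_sq_norm_sub {b : ℝ} (hb : 0 < b) (y₀ : E) :
    ∫⁻ y : E, ENNReal.ofReal (rexp (-b * ‖y - y₀‖ ^ 2))
      = ENNReal.ofReal ((π / b) ^ (Module.finrank ℝ E / 2 : ℝ)) := by
  have hval := GaussianFourier.integral_rexp_neg_mul_sq_norm (V := E) hb
  rw [lintegral_sub_right_eq_self (fun y : E => ENNReal.ofReal (rexp (-b * ‖y‖ ^ 2))) y₀, ← hval,
    ofReal_integral_eq_lintegral_ofReal (.of_integral_ne_zero (by rw [hval]; positivity))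
      (ae_of_all _ fun y => (exp_pos _).le)]

theorem lintegral_indicator_exp_neg_div_le {S : Set E} {f : E → ℝ} {a : ℝ} (ha : 0 < a)
    (hf : ∀ y ∈ S, 0 ≤ f y) (hS : ∀ y ∈ S, ∀ y' ∈ S, a * ‖y - y'‖ ^ 2 ≤ f y + f y') {ε : ℝ}
    (hε : 0 < ε) :
    ∫⁻ y, S.indicator (fun y => ENNReal.ofReal (rexp (-f y / ε))) y
      ≤ ENNReal.ofReal (rexp (1 / 2) * (2 * π / a) ^ (Module.finrank ℝ E / 2 : ℝ)
        * ε ^ (Module.finrank ℝ E / 2 : ℝ)) := by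
  rcases S.eq_empty_or_nonempty with rfl | hne
  · simp
  obtain ⟨_, ⟨y₀, hy₀, rfl⟩, hlt⟩ := exists_lt_of_csInf_lt (hne.image f)
    (lt_add_of_pos_right (sInf (f '' S)) hε)
  have hinf : ∀ y ∈ S, sInf (f '' S) ≤ f y := fun y hy =>
    csInf_le ⟨0, forall_mem_image.2 hf⟩ (mem_image_of_mem f hy)
  have hexp : ∀ y ∈ S, -f y / ε ≤ 1 / 2 + -(a / (2 * ε)) * ‖y - y₀‖ ^ 2 := fun y hy => by
    rw [div_le_iff₀ hε]
    have heq : (1 / 2 + -(a / (2 * ε)) * ‖y - y₀‖ ^ 2) * ε = ε / 2 - a * ‖y - y₀‖ ^ 2 / 2 := by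
      field_simp
      ring
    linarith [hS y hy y₀ hy₀, hinf y hy]
  calc ∫⁻ y, S.indicator (fun y => ENNReal.ofReal (rexp (-f y / ε))) y
      ≤ ∫⁻ y, ENNReal.ofReal (rexp (1 / 2)) *
          ENNReal.ofReal (rexp (-(a / (2 * ε)) * ‖y - y₀‖ ^ 2)) := by
        refine lintegral_mono (indicator_le fun y hy => ?_)
        rw [← ENNReal.ofReal_mul (exp_pos _).le, ← exp_add]
        exact ENNReal.ofReal_le_ofReal (exp_le_exp.2 (hexp y hy))
    _ = ENNReal.ofReal (rexp (1 / 2)) *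
          ENNReal.ofReal ((π / (a / (2 * ε))) ^ (Module.finrank ℝ E / 2 : ℝ)) := by
        rw [lintegral_const_mul' _ _ ENNReal.ofReal_ne_top,
          lintegral_exp_neg_mul_sq_norm_sub (by positivity)]
    _ = _ := by
        rw [← ENNReal.ofReal_mul (exp_pos _).le, mul_assoc, ← mul_rpow (by positivity) hε.le]
        congr 4
        field_simp

theorem lintegral_prod_eq_lintegral_shear (T : E →L[ℝ] E) {f : E × E → ℝ≥0∞}
    (hf : Measurable f) : ∫⁻ p, f p = ∫⁻ v : E, ∫⁻ y : E, f (v + T y, y) := by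
  rw [Measure.volume_eq_prod, lintegral_prod_symm _ hf.aemeasurable,
    lintegral_lintegral_swap (f := fun v y => f (v + T y, y))
      (hf.comp (by fun_prop)).aemeasurable]
  exact lintegral_congr fun y => (lintegral_add_right_eq_self (fun x => f (x, y)) (T y)).symm

variable {c : E × E → ℝ} {K L : Set E}

/-- The Gibbs weight of `c - φ ⊕ ψ` on `s ∩ K × L` has mass `O(ε ^ (d / 2))`, uniformly over the
Kantorovich potentials `φ`, `ψ` for `c` on `K × L`. -/
def GibbsBound (c : E × E → ℝ) (K L : Set E) (s : Set (E × E)) : Prop :=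
  ∃ C : ℝ≥0, ∀ ε : ℝ, 0 < ε → ∀ φ ψ : E → ℝ, IsDualFeasible c K L φ ψ →
    ∫⁻ p in s ∩ K ×ˢ L, ENNReal.ofReal (rexp (-(c p - (φ p.1 + ψ p.2)) / ε))
      ≤ C * ENNReal.ofReal (ε ^ (Module.finrank ℝ E / 2 : ℝ))

theorem IsDualFeasible.measurable_indicator_exp {φ ψ : E → ℝ} (h : IsDualFeasible c K L φ ψ)
    (hc : Continuous c) {W : Set (E × E)} (hW : MeasurableSet W) (hWKL : W ⊆ K ×ˢ L) (ε : ℝ) :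
    Measurable (W.indicator fun p => ENNReal.ofReal (rexp (-(c p - (φ p.1 + ψ p.2)) / ε))) := by
  rw [← piecewise_eq_indicator]
  exact ContinuousOn.measurable_piecewise (ENNReal.continuous_ofReal.comp_continuousOn
    ((h.continuousOn_exp hc ε).mono hWKL)) continuousOn_const hW

theorem IsDualFeasible.lintegral_indicator_exp_shear_le {φ ψ : E → ℝ}
    (h : IsDualFeasible c K L φ ψ) {W : Set (E × E)} (hWKL : W ⊆ K ×ˢ L) {T : E →L[ℝ] E} {a : ℝ}
    (ha : 0 < a) (hT : ∀ p ∈ W, ∀ q ∈ W, p.1 - q.1 = T (p.2 - q.2) →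
      a * ‖p.2 - q.2‖ ^ 2 ≤ crossDiff c p q) {ε : ℝ} (hε : 0 < ε) (v : E) :
    ∫⁻ y, W.indicator (fun p => ENNReal.ofReal (rexp (-(c p - (φ p.1 + ψ p.2)) / ε))) (v + T y, y)
      ≤ ENNReal.ofReal (rexp (1 / 2) * (2 * π / a) ^ (Module.finrank ℝ E / 2 : ℝ)
        * ε ^ (Module.finrank ℝ E / 2 : ℝ)) := by
  refine lintegral_indicator_exp_neg_div_le (S := {y | (v + T y, y) ∈ W})
    (f := fun y => c (v + T y, y) - (φ (v + T y) + ψ y)) ha (fun y hy => ?_)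
    (fun y hy y' hy' => ?_) hε
  · exact sub_nonneg.2 (h.add_le _ (hWKL hy).1 _ (hWKL hy).2)
  · have hcross := hT _ hy _ hy' (by simp)
    have hle := h.add_le _ (hWKL hy).1 _ (hWKL hy').2
    have hle' := h.add_le _ (hWKL hy').1 _ (hWKL hy).2
    simp only [crossDiff] at hcross hle hle'
    linarith

theorem gibbsBound_ball (hc : Continuous c) (hK : MeasurableSet K) (hL : MeasurableSet L)
    {p₀ : E × E} {r a : ℝ} (ha : 0 < a) {T : E →L[ℝ] E}
    (hT : ∀ p ∈ Metric.ball p₀ r, ∀ q ∈ Metric.ball p₀ r, p.1 - q.1 = T (p.2 - q.2) →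
      a * ‖p.2 - q.2‖ ^ 2 ≤ crossDiff c p q) :
    GibbsBound c K L (Metric.ball p₀ r) := by
  let V : Set E := Metric.closedBall (p₀.1 - T p₀.2) ((1 + ‖T‖) * r)
  let A : ℝ := rexp (1 / 2) * (2 * π / a) ^ (Module.finrank ℝ E / 2 : ℝ)
  have hV : volume V ≠ ∞ := measure_closedBall_lt_top.ne
  refine ⟨(ENNReal.ofReal A * volume V).toNNReal, fun ε hε φ ψ hφψ => ?_⟩
  have hW : MeasurableSet (Metric.ball p₀ r ∩ K ×ˢ L) := measurableSet_ball.inter (hK.prod hL)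
  rw [ENNReal.coe_toNNReal (ENNReal.mul_ne_top ENNReal.ofReal_ne_top hV),
    ← lintegral_indicator hW, lintegral_prod_eq_lintegral_shear T
      (hφψ.measurable_indicator_exp hc hW inter_subset_right ε)]
  calc ∫⁻ v, ∫⁻ y, (Metric.ball p₀ r ∩ K ×ˢ L).indicator
        (fun p => ENNReal.ofReal (rexp (-(c p - (φ p.1 + ψ p.2)) / ε))) (v + T y, y)
      ≤ ∫⁻ v, V.indicator
          (fun _ => ENNReal.ofReal (A * ε ^ (Module.finrank ℝ E / 2 : ℝ))) v := by
        refine lintegral_mono fun v => ?_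
        by_cases hv : v ∈ V
        · rw [indicator_of_mem hv]
          exact hφψ.lintegral_indicator_exp_shear_le inter_subset_right ha
            (fun p hp q hq => hT p hp.1 q hq.1) hε v
        · have hout : ∀ y, (v + T y, y) ∉ Metric.ball p₀ r ∩ K ×ˢ L := fun y hy =>
            hv (mem_closedBall_of_add_mem_ball T hy.1)
          simp only [indicator_of_notMem (hout _), lintegral_zero, zero_le]
    _ = ENNReal.ofReal A * volume V * ENNReal.ofReal (ε ^ (Module.finrank ℝ E / 2 : ℝ)) := by
        rw [lintegral_indicator_const measurableSet_closedBall,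
          ENNReal.ofReal_mul (by positivity), mul_right_comm]

theorem gibbsBound_of_isCompact (hc : ContDiff ℝ 2 c) (hK : IsCompact K) (hL : IsCompact L)
    (htwist : ∀ p ∈ K ×ˢ L, Function.Injective (mixedFDeriv c p)) :
    GibbsBound c K L (K ×ˢ L) := by
  refine (hK.prod hL).induction_on (p := GibbsBound c K L) ⟨0, fun ε _ φ ψ _ => by simp⟩ ?_ ?_ ?_
  · rintro s t hst ⟨C, hC⟩
    exact ⟨C, fun ε hε φ ψ h =>
      (lintegral_mono_set (inter_subset_inter_left _ hst)).trans (hC ε hε φ ψ h)⟩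
  · rintro s t ⟨C, hC⟩ ⟨D, hD⟩
    refine ⟨C + D, fun ε hε φ ψ h => ?_⟩
    rw [union_inter_distrib_right, ENNReal.coe_add, add_mul]
    exact (lintegral_union_le _ _ _).trans (add_le_add (hC ε hε φ ψ h) (hD ε hε φ ψ h))
  · intro p hp
    obtain ⟨T, a, r, ha, hr, hT⟩ := exists_ball_mul_sq_norm_le_crossDiff hc (htwist p hp)
    exact ⟨_, mem_nhdsWithin_of_mem_nhds (Metric.ball_mem_nhds p hr),
      gibbsBound_ball hc.continuous hK.measurableSet hL.measurableSet ha hT⟩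

/-- Probability measures carried by `K` whose Lebesgue density is at most `M`. -/
structure HasBoundedDensityOn (μ : Measure E) (K : Set E) (M : ℝ≥0) : Prop where
  isProbabilityMeasure : IsProbabilityMeasure μ
  ae_mem : ∀ᵐ x ∂μ, x ∈ K
  le_smul_volume : μ ≤ M • volume

variable {M N : ℝ≥0}

theorem HasBoundedDensityOn.lintegral_prod_le {μ ν : Measure E} (hμ : HasBoundedDensityOn μ K M)
    (hν : HasBoundedDensityOn ν L N) (f : E × E → ℝ≥0∞) :
    ∫⁻ p, f p ∂μ.prod ν ≤ (M * N) * ∫⁻ p in K ×ˢ L, f p := by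
  have := hμ.isProbabilityMeasure
  have := hν.isProbabilityMeasure
  rw [← Measure.restrict_eq_self_of_ae_mem
    ((isCoupling_prod μ ν).ae_mem_prod hμ.ae_mem hν.ae_mem)]
  calc ∫⁻ p in K ×ˢ L, f p ∂μ.prod ν
      ≤ ∫⁻ p in K ×ˢ L, f p ∂(M • volume).prod (N • volume) :=
        lintegral_mono' (Measure.restrict_mono le_rfl
          (Measure.prod_mono hμ.le_smul_volume hν.le_smul_volume)) le_rfl
    _ = (M * N) * ∫⁻ p in K ×ˢ L, f p := by
        rw [Measure.prod_smul_left, Measure.prod_smul_right, smul_smul, Measure.restrict_smul,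
          lintegral_smul_measure, ENNReal.smul_def, smul_eq_mul, ENNReal.coe_mul]
        rfl

theorem GibbsBound.exists_integral_exp_le (hG : GibbsBound c K L (K ×ˢ L)) (hc : Continuous c)
    (hK : IsCompact K) (hL : IsCompact L) (M N : ℝ≥0) :
    ∃ C : ℝ, 0 < C ∧ ∀ μ ν, HasBoundedDensityOn μ K M → HasBoundedDensityOn ν L N →
      ∀ φ ψ, IsDualFeasible c K L φ ψ → ∀ ε : ℝ, 0 < ε →
        Integrable (fun p => rexp (-(c p - (φ p.1 + ψ p.2)) / ε)) (μ.prod ν) ∧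
        ∫ p, rexp (-(c p - (φ p.1 + ψ p.2)) / ε) ∂μ.prod ν
          ≤ C * ε ^ (Module.finrank ℝ E / 2 : ℝ) := by
  obtain ⟨C, hC⟩ := hG
  refine ⟨M * N * C + 1, by positivity, fun μ ν hμ hν φ ψ hφψ ε hε => ?_⟩
  have := hμ.isProbabilityMeasure
  have := hν.isProbabilityMeasure
  have hInt : Integrable (fun p => rexp (-(c p - (φ p.1 + ψ p.2)) / ε)) (μ.prod ν) :=
    integrable_of_continuousOn_of_ae_mem (hK.prod hL)
      ((isCoupling_prod μ ν).ae_mem_prod hμ.ae_mem hν.ae_mem) (hφψ.continuousOn_exp hc ε)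
  refine ⟨hInt, (ENNReal.ofReal_le_ofReal_iff (by positivity)).1 ?_⟩
  rw [ofReal_integral_eq_lintegral_ofReal hInt (ae_of_all _ fun p => (exp_pos _).le)]
  have hKL := hC ε hε φ ψ hφψ
  rw [inter_self] at hKL
  calc ∫⁻ p, ENNReal.ofReal (rexp (-(c p - (φ p.1 + ψ p.2)) / ε)) ∂μ.prod ν
      ≤ (M * N) * (C * ENNReal.ofReal (ε ^ (Module.finrank ℝ E / 2 : ℝ))) :=
        (hμ.lintegral_prod_le hν _).trans (by gcongr)
    _ = ENNReal.ofReal (M * N * C * ε ^ (Module.finrank ℝ E / 2 : ℝ)) := by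
        rw [ENNReal.ofReal_mul (by positivity), ENNReal.ofReal_mul (by positivity),
          ENNReal.ofReal_mul (by positivity)]
        simp only [ENNReal.ofReal_coe_nnreal, mul_assoc]
    _ ≤ ENNReal.ofReal ((M * N * C + 1) * ε ^ (Module.finrank ℝ E / 2 : ℝ)) := by
        gcongr
        linarith

/-- Weak duality: apply the Gibbs variational principle to `-(c - φ ⊕ ψ) / ε`. -/
theorem GibbsBound.exists_le_integral_add_klDiv (hG : GibbsBound c K L (K ×ˢ L))
    (hc : Continuous c) (hK : IsCompact K) (hL : IsCompact L) (M N : ℝ≥0) :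
    ∃ C : ℝ, ∀ μ ν, HasBoundedDensityOn μ K M → HasBoundedDensityOn ν L N →
      ∀ φ ψ, IsDualFeasible c K L φ ψ → ∀ γ, IsCoupling γ μ ν → klDiv γ (μ.prod ν) ≠ ∞ →
      ∀ ε : ℝ, 0 < ε →
        ∫ x, φ x ∂μ + ∫ y, ψ y ∂ν + Module.finrank ℝ E / 2 * (ε * log (1 / ε)) - C * ε
          ≤ ∫ p, c p ∂γ + ε * (klDiv γ (μ.prod ν)).toReal := by
  obtain ⟨C, hC, hexp⟩ := hG.exists_integral_exp_le hc hK hL M N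
  refine ⟨log C, fun μ ν hμ hν φ ψ hφψ γ hγ hfin ε hε => ?_⟩
  have := hμ.isProbabilityMeasure
  have := hν.isProbabilityMeasure
  have := hγ.isProbabilityMeasure
  have hcγ := hγ.integrable_of_continuous hK hL hμ.ae_mem hν.ae_mem hc
  have hφ := integrable_of_continuousOn_of_ae_mem hK hμ.ae_mem hφψ.continuousOn_left
  have hψ := integrable_of_continuousOn_of_ae_mem hL hν.ae_mem hφψ.continuousOn_right
  obtain ⟨hInt, hle⟩ := hexp μ ν hμ hν φ ψ hφψ ε hε
  have hgibbs := integral_le_toReal_klDiv_add_log_integral_exp hfin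
    ((hcγ.sub (hγ.integrable_add hφ hψ)).neg.div_const ε) hInt
  simp only [Pi.neg_apply, Pi.sub_apply, integral_div, integral_neg] at hgibbs
  rw [hγ.integral_sub_add hcγ hφ hψ, div_le_iff₀ hε] at hgibbs
  have hlog : log (∫ p, rexp (-(c p - (φ p.1 + ψ p.2)) / ε) ∂μ.prod ν)
      ≤ log C - Module.finrank ℝ E / 2 * log (1 / ε) := by
    have hmono := log_le_log (integral_exp_pos hInt) hle
    rw [log_mul hC.ne' (rpow_pos_of_pos hε _).ne', log_rpow hε] at hmono
    rw [one_div, log_inv]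
    linarith
  linarith [mul_le_mul_of_nonneg_right hlog hε.le]

end Laplace

/-! ### Semiconcave functions -/

theorem exists_contDiff_cutoff {V : Type*} [NormedAddCommGroup V] [NormedSpace ℝ V]
    [FiniteDimensional ℝ V] {K U : Set V} (hK : IsCompact K) (hU : IsOpen U) (hKU : K ⊆ U)
    (n : ℕ∞) :
    ∃ χ : V → ℝ, ContDiff ℝ n χ ∧ HasCompactSupport χ ∧ tsupport χ ⊆ U ∧ (∀ x, 0 ≤ χ x) ∧
      ∀ x ∈ K, χ =ᶠ[𝓝 x] 1 := by
  obtain ⟨K', hK', hKK', hK'U⟩ := exists_compact_between hK hU hKU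
  obtain ⟨χ, hχ_one, hχ_zero, hχ⟩ := exists_contMDiffMap_one_nhds_of_subset_interior
    (n := n) (modelWithCornersSelf ℝ V) hK.isClosed hKK'
  have hsupp : Function.support χ ⊆ K' := fun x hx => by_contra fun hxK => hx (hχ_zero x hxK)
  exact ⟨χ, χ.contMDiff.contDiff, .of_support_subset_isCompact hK' hsupp,
    (closure_minimal hsupp hK'.isClosed).trans hK'U, fun x => (hχ x).1,
    eventually_nhdsSet_iff_forall.1 hχ_one⟩

section Semiconcave

variable {E F : Type*} [NormedAddCommGroup E] [NormedSpace ℝ E] [NormedAddCommGroup F]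
  [NormedSpace ℝ F]

/-- `D` is a supergradient of `φ` at `x` up to the quadratic error of constant `A` and the additive
error `e`. -/
def IsApproxSupergradient (A e : ℝ) (φ : E → ℝ) (x : E) (D : E →L[ℝ] ℝ) : Prop :=
  ∀ z, φ z ≤ φ x + D (z - x) + A * ‖z - x‖ ^ 2 + e

/-- Semiconcavity with constant `A`, in terms of supergradients. -/
def Semiconcave (A : ℝ) (φ : E → ℝ) : Prop :=
  ∀ x, ∃ D, IsApproxSupergradient A 0 φ x D

/-- The second difference of `φ` at `x` in the direction `h`, with the sign and the quadratic
correction that make it nonnegative when `φ` is semiconcave with constant `A`. -/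
def secondDiff (A : ℝ) (φ : E → ℝ) (h x : E) : ℝ :=
  2 * φ x - φ (x + h) - φ (x - h) + 2 * A * ‖h‖ ^ 2

variable {A e : ℝ} {φ : E → ℝ} {x : E} {D : E →L[ℝ] ℝ}

theorem exists_isApproxSupergradient_fderiv {c : E → ℝ} (hc : ContDiff ℝ 2 c)
    (hs : HasCompactSupport c) :
    ∃ A, 0 ≤ A ∧ ∀ p, IsApproxSupergradient A 0 c p (fderiv ℝ c p) := by
  obtain ⟨A, hA⟩ := (hc.fderiv_right (m := 1) (by norm_num)).lipschitzWith_of_hasCompactSupport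
    (hs.fderiv ℝ) one_ne_zero
  refine ⟨A, A.2, fun p q => ?_⟩
  have hmean := (convex_closedBall p ‖q - p‖).norm_image_sub_le_of_norm_hasFDerivWithin_le'
    (φ := fderiv ℝ c p) (C := A * ‖q - p‖) (x := p) (y := q)
    (fun z _ => ((hc.differentiable two_ne_zero) z).hasFDerivAt.hasFDerivWithinAt)
    (fun z hz => by
      rw [← dist_eq_norm]
      exact (hA.dist_le_mul z p).trans (mul_le_mul_of_nonneg_left hz A.2))
    (by simp) (by simp [dist_eq_norm])
  have hle := (le_abs_self _).trans hmean
  linarith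

theorem IsApproxSupergradient.of_le {g : E → ℝ} (hg : IsApproxSupergradient A 0 g x D)
    (hφg : φ ≤ g) : IsApproxSupergradient A (g x - φ x) φ x D := fun z => by
  linarith [hφg z, hg z]

theorem IsApproxSupergradient.sub_const (h : IsApproxSupergradient A e φ x D) (a : ℝ) :
    IsApproxSupergradient A e (fun z => φ z - a) x D := fun z => by
  linarith [h z]

theorem IsApproxSupergradient.comp_prodMk_right {c : E × F → ℝ} {y : F} {D : E × F →L[ℝ] ℝ}
    (h : IsApproxSupergradient A e c (x, y) D) :
    IsApproxSupergradient A e (fun z => c (z, y)) x (D.comp (.inl ℝ E F)) := fun z => by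
  simpa [Prod.norm_def] using h (z, y)

theorem IsApproxSupergradient.comp_prodMk_left {c : E × F → ℝ} {y : F} {D : E × F →L[ℝ] ℝ}
    (h : IsApproxSupergradient A e c (x, y) D) :
    IsApproxSupergradient A e (fun z => c (x, z)) y (D.comp (.inr ℝ E F)) := fun z => by
  simpa [Prod.norm_def] using h (x, z)

theorem IsApproxSupergradient.nonneg (h : IsApproxSupergradient A e φ x D) : 0 ≤ e := by
  simpa using h x

theorem Semiconcave.secondDiff_nonneg (hφ : Semiconcave A φ) (h x : E) :
    0 ≤ secondDiff A φ h x := by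
  obtain ⟨D, hD⟩ := hφ x
  have hright := hD (x + h)
  have hleft := hD (x - h)
  rw [add_sub_cancel_left] at hright
  rw [sub_sub_cancel_left, norm_neg, map_neg] at hleft
  unfold secondDiff
  linarith

theorem Semiconcave.secondDiff_sign_smul_le (hφ : Semiconcave A φ) (t : ℝ) (h x : E) :
    secondDiff A φ ((SignType.sign t : ℝ) • h) x ≤ secondDiff A φ h x := by
  rcases lt_trichotomy t 0 with ht | rfl | ht
  · refine le_of_eq ?_
    simp only [secondDiff, sign_neg ht, SignType.coe_neg_one, neg_smul, one_smul, norm_neg,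
      sub_neg_eq_add, ← sub_eq_add_neg]
    ring
  · simpa [secondDiff, two_mul] using hφ.secondDiff_nonneg h x
  · simp [sign_pos ht]

theorem continuous_secondDiff {V : Type*} [NormedAddCommGroup V] (A : ℝ) {φ : V → ℝ}
    (hφ : Continuous φ) (h : V) : Continuous (secondDiff A φ h) := by
  unfold secondDiff
  fun_prop

theorem IsApproxSupergradient.apply_le_add_secondDiff (h : IsApproxSupergradient A e φ x D)
    (hA : 0 ≤ A) (v : E) : φ x + D v ≤ φ (x + v) + secondDiff A φ v x + e := by
  have hle := h (x - v)
  rw [sub_sub_cancel_left, map_neg, norm_neg] at hle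
  have : 0 ≤ A * ‖v‖ ^ 2 := by positivity
  unfold secondDiff
  linarith

variable {ι : Type*} [Fintype ι] {δ : ℝ}

/- The supergradient `l` at `x + h` controls `φ` from above at each `x + v k`, and the second
differences at `x` control it from below there by `D`; averaging over `k` compares `D h` with
`l h`. -/
theorem Semiconcave.apply_sum_smul_le (hφ : Semiconcave A φ) (hA : 0 ≤ A)
    (hD : IsApproxSupergradient A e φ x D) {w : ι → ℝ} (hw : ∀ k, 0 ≤ w k)
    (hw_sum : ∑ k, w k ≤ 1) {v : ι → E} (hv : ∀ k, ‖v k‖ ≤ δ) (hδ : 0 ≤ δ) :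
    D (∑ k, w k • v k) ≤ φ (x + ∑ k, w k • v k) - φ x + ∑ k, secondDiff A φ (v k) x + e
      + 4 * A * δ ^ 2 := by
  set h := ∑ k, w k • v k with hh
  have hh_norm : ‖h‖ ≤ δ := by
    calc ‖h‖ ≤ ∑ k, w k * δ := norm_sum_le_of_le _ fun k _ => by
          rw [norm_smul, Real.norm_of_nonneg (hw k)]
          exact mul_le_mul_of_nonneg_left (hv k) (hw k)
      _ ≤ δ := by
          rw [← Finset.sum_mul]
          exact mul_le_of_le_one_left hδ hw_sum
  obtain ⟨l, hl⟩ := hφ (x + h)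
  set a := φ (x + h) - φ x - l h + 4 * A * δ ^ 2 + e
  have hupper : ∀ u : E, ‖u‖ ≤ δ → φ (x + u) - φ x + e ≤ l u + a := fun u hu => by
    have hle := hl (x + u)
    rw [add_sub_add_left_eq_sub, map_sub] at hle
    have hdist : ‖u - h‖ ≤ 2 * δ := (norm_sub_le u h).trans (by linarith)
    have hsq : A * ‖u - h‖ ^ 2 ≤ A * (2 * δ) ^ 2 := by gcongr
    linarith
  have ha_nonneg : 0 ≤ a := by
    have := hupper 0 (by simpa using hδ)
    simp only [add_zero, sub_self, zero_add, map_zero] at this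
    exact hD.nonneg.trans this
  have hpoint : ∀ k, w k * (D (v k) - l (v k)) ≤ w k * a + secondDiff A φ (v k) x := fun k => by
    have hle : D (v k) - l (v k) ≤ a + secondDiff A φ (v k) x := by
      linarith [hupper (v k) (hv k), hD.apply_le_add_secondDiff hA (v k)]
    have hwk : w k ≤ 1 := (Finset.single_le_sum (fun i _ => hw i) (Finset.mem_univ k)).trans hw_sum
    have hS := mul_le_of_le_one_left (hφ.secondDiff_nonneg (v k) x) hwk
    linarith [mul_le_mul_of_nonneg_left hle (hw k)]
  have hsum : D h - l h ≤ (∑ k, w k) * a + ∑ k, secondDiff A φ (v k) x := by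
    rw [Finset.sum_mul, ← Finset.sum_add_distrib]
    refine le_of_eq_of_le ?_ (Finset.sum_le_sum fun k _ => hpoint k)
    simp [hh, map_sum, mul_sub]
  linarith [mul_le_of_le_one_left ha_nonneg hw_sum]

theorem Semiconcave.apply_le_of_sum_abs_le (hφ : Semiconcave A φ) (hA : 0 ≤ A)
    (hD : IsApproxSupergradient A e φ x D) {t : ι → ℝ} (ht : ∑ k, |t k| ≤ δ) (hδ : 0 < δ)
    {b : ι → E} (hb : ∀ k, ‖b k‖ ≤ 1) :
    D (∑ k, t k • b k) ≤ φ (x + ∑ k, t k • b k) - φ x + ∑ k, secondDiff A φ (δ • b k) x + e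
      + 4 * A * δ ^ 2 := by
  have hv : ∀ k, ‖(SignType.sign (t k) : ℝ) • δ • b k‖ ≤ δ := fun k => by
    rw [norm_smul, norm_smul, Real.norm_of_nonneg hδ.le]
    refine (mul_le_of_le_one_left (by positivity) ?_).trans (mul_le_of_le_one_right hδ.le (hb k))
    cases SignType.sign (t k) <;> simp
  have hle := hφ.apply_sum_smul_le hA hD (w := fun k => |t k| / δ) (fun k => by positivity)
    (by rwa [← Finset.sum_div, div_le_one hδ]) hv hδ.le
  have hsmul : ∀ k, (|t k| / δ) • (SignType.sign (t k) : ℝ) • δ • b k = t k • b k := fun k => by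
    rw [smul_smul, smul_smul]
    congr 1
    rw [mul_right_comm, div_mul_cancel₀ _ hδ.ne', abs_mul_sign]
  simp only [hsmul] at hle
  have hS := Finset.sum_le_sum fun k (_ : k ∈ Finset.univ) =>
    hφ.secondDiff_sign_smul_le (t k) (δ • b k) x
  linarith

end Semiconcave

section MeanSecondDifference

variable {E : Type*} [NormedAddCommGroup E] [InnerProductSpace ℝ E] [FiniteDimensional ℝ E]
  [MeasurableSpace E] [BorelSpace E] {A : ℝ} {φ w : E → ℝ} {K : Set E} {L M : ℝ≥0}

theorem integral_secondDiff_mul_eq (A : ℝ) (hφ : Continuous φ) (hw : Continuous w)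
    (hws : HasCompactSupport w) (h : E) :
    ∫ x, secondDiff A φ h x * w x
      = (∫ x, (φ x - φ (x + h)) * (w x - w (x + h))) + 2 * A * ‖h‖ ^ 2 * ∫ x, w x := by
  have hInt : ∀ {f g : E → ℝ}, Continuous f → Continuous g → HasCompactSupport g →
      Integrable (fun x => f x * g x) := fun hf hg hgs =>
    (hf.mul hg).integrable_of_hasCompactSupport hgs.mul_left
  have hws' : HasCompactSupport fun x => w (x + h) := hws.comp_homeomorph (Homeomorph.addRight h)
  have hshift : ∫ x, (φ (x - h) - φ x) * w x = ∫ x, (φ x - φ (x + h)) * w (x + h) := by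
    rw [← integral_add_right_eq_self _ h]
    simp only [add_sub_cancel_right]
  have hsplit : ∀ x, secondDiff A φ h x * w x = (φ x - φ (x + h)) * w x
      - (φ (x - h) - φ x) * w x + 2 * A * ‖h‖ ^ 2 * w x := fun x => by
    unfold secondDiff
    ring
  have hright := hInt (f := fun x => φ x - φ (x + h)) (by fun_prop) hw hws
  have hleft := hInt (f := fun x => φ (x - h) - φ x) (by fun_prop) hw hws
  have hright' := hInt (f := fun x => φ x - φ (x + h)) (by fun_prop) (by fun_prop) hws'
  have hdiff : Integrable fun x => (φ x - φ (x + h)) * w x - (φ (x - h) - φ x) * w x :=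
    hright.sub hleft
  simp only [hsplit, mul_sub (φ _ - φ _)]
  rw [integral_add hdiff ((hw.integrable_of_hasCompactSupport hws).const_mul _),
    integral_sub hright hleft, hshift, integral_const_mul, integral_sub hright hright']

theorem integral_secondDiff_mul_le (A : ℝ) (hφ : LipschitzWith L φ) (hw : LipschitzWith M w)
    (hws : HasCompactSupport w) {h : E} (hh : ‖h‖ ≤ 1) :
    ∫ x, secondDiff A φ h x * w x
      ≤ (L * M * volume.real (Metric.cthickening 1 (tsupport w)) + 2 * A * ∫ x, w x)
        * ‖h‖ ^ 2 := by
  set T := Metric.cthickening 1 (tsupport w)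
  have hT : IsCompact T := hws.isCompact.cthickening
  have hbound : ∀ x, ‖(φ x - φ (x + h)) * (w x - w (x + h))‖
      ≤ T.indicator (fun _ => L * M * ‖h‖ ^ 2) x := fun x => by
    by_cases hx : x ∈ T
    · have hφx := hφ.dist_le_mul x (x + h)
      have hwx := hw.dist_le_mul x (x + h)
      rw [dist_self_add_right, Real.dist_eq] at hφx hwx
      rw [indicator_of_mem hx, norm_mul]
      calc ‖φ x - φ (x + h)‖ * ‖w x - w (x + h)‖ ≤ (L * ‖h‖) * (M * ‖h‖) :=
            mul_le_mul hφx hwx (norm_nonneg _) (by positivity)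
        _ = L * M * ‖h‖ ^ 2 := by ring
    · have hwx : w x = 0 :=
        image_eq_zero_of_notMem_tsupport fun hmem => hx (Metric.self_subset_cthickening _ hmem)
      have hwxh : w (x + h) = 0 := image_eq_zero_of_notMem_tsupport fun hmem =>
        hx (Metric.mem_cthickening_of_dist_le x (x + h) 1 _ hmem (by simpa using hh))
      simp [hx, hwx, hwxh]
  have hInt := norm_integral_le_of_norm_le (μ := volume)
    ((integrable_indicator_iff hT.measurableSet).2
      (integrableOn_const hT.measure_lt_top.ne)) (Eventually.of_forall hbound)
  rw [integral_indicator_const _ hT.measurableSet, smul_eq_mul] at hInt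
  rw [integral_secondDiff_mul_eq A hφ.continuous hw.continuous hws]
  linarith [(le_abs_self _).trans hInt]

theorem HasBoundedDensityOn.integral_le_mul_integral_mul {μ : Measure E}
    (hμ : HasBoundedDensityOn μ K M) {f : E → ℝ} (hf : Continuous f) (hf_nonneg : 0 ≤ f)
    (hw : Continuous w) (hws : HasCompactSupport w) (hw_nonneg : ∀ x, 0 ≤ w x)
    (hwK : ∀ x ∈ K, w x = 1) : ∫ x, f x ∂μ ≤ M * ∫ x, f x * w x := by
  have hInt : Integrable (fun x => f x * w x) :=
    (hf.mul hw).integrable_of_hasCompactSupport hws.mul_left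
  calc ∫ x, f x ∂μ = ∫ x, f x * w x ∂μ := integral_congr_ae <| by
        filter_upwards [hμ.ae_mem] with x hx
        rw [hwK x hx, mul_one]
    _ ≤ ∫ x, f x * w x ∂(M • volume) := integral_mono_measure hμ.le_smul_volume
        (Eventually.of_forall fun x => mul_nonneg (hf_nonneg x) (hw_nonneg x))
        hInt.smul_measure_nnreal
    _ = M * ∫ x, f x * w x := integral_smul_nnreal_measure _ _

theorem exists_integral_secondDiff_le (hK : IsCompact K) (A : ℝ) (L M : ℝ≥0) :
    ∃ C : ℝ, ∀ φ : E → ℝ, LipschitzWith L φ → Semiconcave A φ →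
      ∀ μ, HasBoundedDensityOn μ K M →
      ∀ h : E, ‖h‖ ≤ 1 → ∫ x, secondDiff A φ h x ∂μ ≤ C * ‖h‖ ^ 2 := by
  obtain ⟨w, hw, hws, -, hw_nonneg, hwK⟩ := exists_contDiff_cutoff hK isOpen_univ (subset_univ K) 1
  obtain ⟨N, hN⟩ := hw.lipschitzWith_of_hasCompactSupport hws one_ne_zero
  refine ⟨M * (L * N * volume.real (Metric.cthickening 1 (tsupport w)) + 2 * A * ∫ x, w x),
    fun φ hφ hφA μ hμ h hh => ?_⟩
  calc ∫ x, secondDiff A φ h x ∂μ ≤ M * ∫ x, secondDiff A φ h x * w x :=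
        hμ.integral_le_mul_integral_mul (continuous_secondDiff A hφ.continuous h)
          (hφA.secondDiff_nonneg h) hw.continuous hws hw_nonneg fun x hx => (hwK x hx).eq_of_nhds
    _ ≤ _ := by
        rw [mul_assoc]
        exact mul_le_mul_of_nonneg_left (integral_secondDiff_mul_le A hφ hN hws hh) M.2

end MeanSecondDifference

/-! ### Block couplings -/

section EntropyBounds

theorem klDiv_le_ofReal_integral {α : Type*} [MeasurableSpace α] {γ q : Measure α}
    [IsProbabilityMeasure γ] [IsProbabilityMeasure q] (hγq : γ ≪ q) {u : α → ℝ}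
    (hu : Integrable u γ) (hle : ∀ᵐ p ∂q, γ.rnDeriv q p ≤ ENNReal.ofReal (rexp (u p))) :
    klDiv γ q ≤ ENNReal.ofReal (∫ p, u p ∂γ) := by
  have hρ : Integrable (fun p => (γ.rnDeriv q p).toReal) q := Measure.integrable_toReal_rnDeriv
  have hρu : Integrable (fun p => (γ.rnDeriv q p).toReal * u p) q :=
    (integrable_rnDeriv_smul_iff hγq).2 hu
  have hρu_int : ∫ p, (γ.rnDeriv q p).toReal * u p ∂q = ∫ p, u p ∂γ := integral_rnDeriv_smul hγq
  have hklFun : ∀ᵐ p ∂q, klFun (γ.rnDeriv q p).toReal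
      ≤ (γ.rnDeriv q p).toReal * u p + (1 - (γ.rnDeriv q p).toReal) := by
    filter_upwards [hle] with p hp
    have hle_exp : (γ.rnDeriv q p).toReal ≤ rexp (u p) :=
      ENNReal.toReal_le_of_le_ofReal (exp_pos _).le hp
    rw [klFun_apply, add_sub_assoc]
    refine add_le_add_left ?_ _
    rcases (ENNReal.toReal_nonneg (a := γ.rnDeriv q p)).eq_or_lt with h | h
    · simp [← h]
    · exact mul_le_mul_of_nonneg_left ((log_le_iff_le_exp h).2 hle_exp) h.le
  have hone_sub : Integrable (fun p => 1 - (γ.rnDeriv q p).toReal) q :=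
    (integrable_const 1).sub hρ
  rw [klDiv_eq_lintegral_klFun_of_ac hγq]
  calc ∫⁻ p, ENNReal.ofReal (klFun (γ.rnDeriv q p).toReal) ∂q
      ≤ ∫⁻ p, ENNReal.ofReal ((γ.rnDeriv q p).toReal * u p + (1 - (γ.rnDeriv q p).toReal)) ∂q :=
        lintegral_mono_ae (hklFun.mono fun p hp => ENNReal.ofReal_le_ofReal hp)
    _ = ENNReal.ofReal
          (∫ p, ((γ.rnDeriv q p).toReal * u p + (1 - (γ.rnDeriv q p).toReal)) ∂q) :=
        (ofReal_integral_eq_lintegral_ofReal (hρu.add hone_sub) <|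
          hklFun.mono fun p hp => (klFun_nonneg ENNReal.toReal_nonneg).trans hp).symm
    _ = ENNReal.ofReal (∫ p, u p ∂γ) := by
        rw [integral_add hρu hone_sub, integral_sub (integrable_const 1) hρ, hρu_int,
          Measure.integral_toReal_rnDeriv hγq]
        simp

theorem sum_negMulLog_le_log_card {ι : Type*} {s : Finset ι} {w : ι → ℝ} (hw : ∀ i ∈ s, 0 ≤ w i)
    (hsum : ∑ i ∈ s, w i = 1) : ∑ i ∈ s, negMulLog (w i) ≤ log s.card := by
  have hs : (0 : ℝ) < s.card := by
    exact_mod_cast (Finset.nonempty_of_sum_ne_zero (hsum.trans_ne one_ne_zero)).card_pos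
  have hjensen := concaveOn_negMulLog.le_map_sum (t := s) (w := fun _ => (s.card : ℝ)⁻¹) (p := w)
    (fun _ _ => by positivity) (by simp [hs.ne']) hw
  simp only [smul_eq_mul, ← Finset.mul_sum, hsum, mul_one] at hjensen
  rw [negMulLog, log_inv, neg_mul_neg] at hjensen
  exact le_of_mul_le_mul_left hjensen (inv_pos.2 hs)

end EntropyBounds

section BlockDensity

variable {I J : Type*} [MeasurableSpace I] [MeasurableSpace J]

/-- The density of `g` with respect to the product of its marginals, for `g` on a countable discrete
product; it is `0` where one of the marginals has no mass. -/
def blockDensity (g : Measure (I × J)) (p : I × J) : ℝ≥0∞ :=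
  g {p} / (g.fst {p.1} * g.snd {p.2})

variable {α β : Type*} [MeasurableSpace α] [MeasurableSpace β]

/-- The coupling with the same marginals and the same masses of the blocks
`Q ⁻¹' {i} ×ˢ Q' ⁻¹' {j}` as `γ` that is proportional to the product measure on each block. -/
def blockCoupling (γ : Measure (α × β)) (Q : α → I) (Q' : β → J) : Measure (α × β) :=
  (γ.fst.prod γ.snd).withDensity fun p => blockDensity (γ.map (Prod.map Q Q')) (Prod.map Q Q' p)

theorem singleton_le_fst [MeasurableSingletonClass I] (g : Measure (I × J)) (p : I × J) :
    g {p} ≤ g.fst {p.1} := by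
  rw [Measure.fst_apply (measurableSet_singleton _)]
  exact measure_mono (by simp)

theorem singleton_le_snd [MeasurableSingletonClass J] (g : Measure (I × J)) (p : I × J) :
    g {p} ≤ g.snd {p.2} := by
  rw [Measure.snd_apply (measurableSet_singleton _)]
  exact measure_mono (by simp)

theorem blockDensity_le [MeasurableSingletonClass I] (g : Measure (I × J)) [IsFiniteMeasure g]
    (p : I × J) : blockDensity g p ≤ (g.snd {p.2})⁻¹ := by
  rcases eq_or_ne (g.fst {p.1}) 0 with h | h
  · have hp : g {p} = 0 := nonpos_iff_eq_zero.1 ((singleton_le_fst g p).trans h.le)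
    simp [blockDensity, hp]
  · calc blockDensity g p ≤ g.fst {p.1} / (g.fst {p.1} * g.snd {p.2}) :=
          ENNReal.div_le_div_right (singleton_le_fst g p) _
      _ = (g.snd {p.2})⁻¹ := by
          rw [ENNReal.div_eq_inv_mul, ENNReal.mul_inv (.inl h) (.inl (measure_ne_top _ _)),
            mul_right_comm, ENNReal.inv_mul_cancel h (measure_ne_top _ _), one_mul]

variable [MeasurableSingletonClass I] [MeasurableSingletonClass J]

theorem blockDensity_mul (g : Measure (I × J)) [IsFiniteMeasure g] (p : I × J) :
    blockDensity g p * (g.fst {p.1} * g.snd {p.2}) = g {p} := by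
  refine ENNReal.div_mul_cancel' (fun h => ?_)
    fun h => absurd h (ENNReal.mul_ne_top (measure_ne_top _ _) (measure_ne_top _ _))
  rcases mul_eq_zero.1 h with h | h
  · exact nonpos_iff_eq_zero.1 ((singleton_le_fst g p).trans h.le)
  · exact nonpos_iff_eq_zero.1 ((singleton_le_snd g p).trans h.le)

theorem lintegral_blockDensity_snd [Countable J] (g : Measure (I × J)) [IsFiniteMeasure g] {i : I}
    (hi : g.fst {i} ≠ 0) : ∫⁻ j, blockDensity g (i, j) ∂g.snd = 1 := by
  rw [← ENNReal.mul_right_inj hi (measure_ne_top _ _), lintegral_countable', mul_one,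
    Measure.fst_apply (measurableSet_singleton _), measure_preimage_fst_singleton_eq_tsum,
    ← ENNReal.tsum_mul_left]
  refine tsum_congr fun j => ?_
  rw [← blockDensity_mul g (i, j), ← measure_preimage_fst_singleton_eq_tsum,
    Measure.fst_apply (measurableSet_singleton _)]
  ring

theorem lintegral_blockDensity_fst [Countable I] (g : Measure (I × J)) [IsFiniteMeasure g] {j : J}
    (hj : g.snd {j} ≠ 0) : ∫⁻ i, blockDensity g (i, j) ∂g.fst = 1 := by
  rw [← ENNReal.mul_right_inj hj (measure_ne_top _ _), lintegral_countable', mul_one,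
    Measure.snd_apply (measurableSet_singleton _), measure_preimage_snd_singleton_eq_tsum,
    ← ENNReal.tsum_mul_left]
  refine tsum_congr fun i => ?_
  rw [← blockDensity_mul g (i, j), ← measure_preimage_snd_singleton_eq_tsum,
    Measure.snd_apply (measurableSet_singleton _)]
  ring

end BlockDensity

section Marginals

variable {α β I : Type*} [MeasurableSpace α] [MeasurableSpace β] [MeasurableSpace I]

theorem ae_map_singleton_ne_zero [Countable I] {μ : Measure α} {Q : α → I} (hQ : Measurable Q) :
    ∀ᵐ x ∂μ, μ.map Q {Q x} ≠ 0 := by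
  have h : ∀ᵐ i ∂μ.map Q, μ.map Q {i} ≠ 0 := ae_iff_of_countable.2 fun _ hi => hi
  exact ae_of_ae_map hQ.aemeasurable h

variable {μ : Measure α} {ν : Measure β} [SFinite μ] [SFinite ν] {r : α × β → ℝ≥0∞}

theorem fst_withDensity_prod (hr : Measurable r) (h : ∀ᵐ x ∂μ, ∫⁻ y, r (x, y) ∂ν = 1) :
    ((μ.prod ν).withDensity r).fst = μ := by
  ext s hs
  rw [Measure.fst_apply hs, withDensity_apply _ (measurable_fst hs), ← prod_univ,
    ← Measure.prod_restrict, Measure.restrict_univ, lintegral_prod _ hr.aemeasurable,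
    lintegral_congr_ae (ae_restrict_of_ae h), setLIntegral_one]

theorem snd_withDensity_prod (hr : Measurable r) (h : ∀ᵐ y ∂ν, ∫⁻ x, r (x, y) ∂μ = 1) :
    ((μ.prod ν).withDensity r).snd = ν := by
  ext s hs
  rw [Measure.snd_apply hs, withDensity_apply _ (measurable_snd hs), ← univ_prod,
    ← Measure.prod_restrict, Measure.restrict_univ, lintegral_prod_symm _ hr.aemeasurable,
    lintegral_congr_ae (ae_restrict_of_ae h), setLIntegral_one]

end Marginals

section BlockCoupling

variable {I J α β : Type*} [MeasurableSpace I] [MeasurableSpace J] [Countable I] [Countable J]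
  [MeasurableSingletonClass I] [MeasurableSingletonClass J] [MeasurableSpace α] [MeasurableSpace β]
  {μ : Measure α} {ν : Measure β} [IsProbabilityMeasure μ] [IsProbabilityMeasure ν]
  {γ : Measure (α × β)} {Q : α → I} {Q' : β → J}

theorem measurable_blockDensity_comp (g : Measure (I × J)) (hQ : Measurable Q)
    (hQ' : Measurable Q') : Measurable fun p => blockDensity g (Prod.map Q Q' p) :=
  (Measurable.of_discrete (f := blockDensity g)).comp (hQ.prodMap hQ')

theorem isCoupling_blockCoupling (hγ : IsCoupling γ μ ν) (hQ : Measurable Q)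
    (hQ' : Measurable Q') : IsCoupling (blockCoupling γ Q Q') μ ν := by
  have := hγ.isProbabilityMeasure
  have := Measure.isProbabilityMeasure_map (μ := γ) (hQ.prodMap hQ').aemeasurable
  have hg := hγ.map hQ hQ'
  have hr := measurable_blockDensity_comp (γ.map (Prod.map Q Q')) hQ hQ'
  constructor <;> rw [blockCoupling, hγ.fst_eq, hγ.snd_eq]
  · refine fst_withDensity_prod hr ?_
    filter_upwards [ae_map_singleton_ne_zero (μ := μ) hQ] with x hx
    rw [← hg.fst_eq] at hx
    rw [← lintegral_blockDensity_snd _ hx, hg.snd_eq, lintegral_map Measurable.of_discrete hQ']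
    rfl
  · refine snd_withDensity_prod hr ?_
    filter_upwards [ae_map_singleton_ne_zero (μ := ν) hQ'] with y hy
    rw [← hg.snd_eq] at hy
    rw [← lintegral_blockDensity_fst _ hy, hg.fst_eq, lintegral_map Measurable.of_discrete hQ]
    rfl

theorem IsCoupling.map_blockCoupling (hγ : IsCoupling γ μ ν) (hQ : Measurable Q)
    (hQ' : Measurable Q') :
    (blockCoupling γ Q Q').map (Prod.map Q Q') = γ.map (Prod.map Q Q') := by
  have := hγ.isProbabilityMeasure
  have := Measure.isProbabilityMeasure_map (μ := γ) (hQ.prodMap hQ').aemeasurable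
  have hg := hγ.map hQ hQ'
  refine Measure.ext_of_singleton fun p => ?_
  have hp : MeasurableSet (Prod.map Q Q' ⁻¹' {p}) := hQ.prodMap hQ' (measurableSet_singleton p)
  have hpre : Prod.map Q Q' ⁻¹' {p} = (Q ⁻¹' {p.1}) ×ˢ (Q' ⁻¹' {p.2}) := by
    ext z
    simp [Prod.ext_iff]
  rw [Measure.map_apply (hQ.prodMap hQ') (measurableSet_singleton p), blockCoupling,
    withDensity_apply _ hp, setLIntegral_congr_fun hp
      (g := fun _ => blockDensity (γ.map (Prod.map Q Q')) p) fun z hz => congrArg _ hz,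
    setLIntegral_const, ← blockDensity_mul, hg.fst_eq, hg.snd_eq, hγ.fst_eq, hγ.snd_eq, hpre,
    Measure.prod_prod, Measure.map_apply hQ (measurableSet_singleton _),
    Measure.map_apply hQ' (measurableSet_singleton _)]

theorem IsCoupling.rnDeriv_blockCoupling_le (hγ : IsCoupling γ μ ν) (hQ : Measurable Q)
    (hQ' : Measurable Q') : ∀ᵐ p ∂μ.prod ν, (blockCoupling γ Q Q').rnDeriv (μ.prod ν) p
      ≤ ENNReal.ofReal (rexp (-log ((ν.map Q').real {Q' p.2}))) := by
  have := hγ.isProbabilityMeasure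
  have := Measure.isProbabilityMeasure_map (μ := γ) (hQ.prodMap hQ').aemeasurable
  have := Measure.isProbabilityMeasure_map (μ := ν) hQ'.aemeasurable
  rw [blockCoupling, hγ.fst_eq, hγ.snd_eq]
  filter_upwards [Measure.rnDeriv_withDensity (μ.prod ν) (measurable_blockDensity_comp _ hQ hQ'),
    Measure.quasiMeasurePreserving_snd.ae (ae_map_singleton_ne_zero (μ := ν) hQ')] with p hp hpos
  have hpos' : 0 < (ν.map Q').real {Q' p.2} := ENNReal.toReal_pos hpos (measure_ne_top _ _)
  rw [hp, exp_neg, exp_log hpos', ENNReal.ofReal_inv_of_pos hpos', ofReal_measureReal,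
    ← (hγ.map hQ hQ').snd_eq]
  exact blockDensity_le _ _

theorem integral_neg_log_map_singleton_le {F : Finset J} (hQ' : Measurable Q')
    (hF : ∀ᵐ y ∂ν, Q' y ∈ F) :
    Integrable (fun y => -log ((ν.map Q').real {Q' y})) ν ∧
      ∫ y, -log ((ν.map Q').real {Q' y}) ∂ν ≤ log F.card := by
  have := Measure.isProbabilityMeasure_map (μ := ν) hQ'.aemeasurable
  have hF' : ∀ᵐ j ∂ν.map Q', j ∈ (F : Set J) :=
    (ae_map_iff hQ'.aemeasurable F.countable_toSet.measurableSet).2 hF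
  have hmeas : AEStronglyMeasurable (fun j => -log ((ν.map Q').real {j})) (ν.map Q') :=
    (Measurable.of_discrete).aestronglyMeasurable
  have hInt : IntegrableOn (fun j => -log ((ν.map Q').real {j})) F (ν.map Q') :=
    IntegrableOn.finset
  have hsum : ∑ j ∈ F, (ν.map Q').real {j} = 1 := by
    rw [sum_measureReal_singleton, measureReal_def, (mem_ae_iff_prob_eq_one
      F.countable_toSet.measurableSet).1 hF', ENNReal.toReal_one]
  have hsetInt := setIntegral_finset F hInt
  rw [IntegrableOn, Measure.restrict_eq_self_of_ae_mem hF'] at hInt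
  rw [Measure.restrict_eq_self_of_ae_mem hF'] at hsetInt
  refine ⟨(integrable_map_measure hmeas hQ'.aemeasurable).1 hInt, ?_⟩
  rw [← integral_map hQ'.aemeasurable hmeas, hsetInt]
  simp only [smul_eq_mul, ← neg_mul_comm]
  exact sum_negMulLog_le_log_card (fun j _ => measureReal_nonneg) hsum

theorem IsCoupling.klDiv_blockCoupling_le {F : Finset J} (hγ : IsCoupling γ μ ν)
    (hQ : Measurable Q) (hQ' : Measurable Q') (hF : ∀ᵐ y ∂ν, Q' y ∈ F) :
    klDiv (blockCoupling γ Q Q') (μ.prod ν) ≤ ENNReal.ofReal (log F.card) := by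
  have hγ' := isCoupling_blockCoupling hγ hQ hQ'
  have := hγ'.isProbabilityMeasure
  obtain ⟨hInt, hle⟩ := integral_neg_log_map_singleton_le hQ' hF
  have hac : blockCoupling γ Q Q' ≪ μ.prod ν := by
    rw [blockCoupling, hγ.fst_eq, hγ.snd_eq]
    exact withDensity_absolutelyContinuous _ _
  refine (klDiv_le_ofReal_integral hac (hγ'.integrable_comp_snd hInt)
    (hγ.rnDeriv_blockCoupling_le hQ hQ')).trans (ENNReal.ofReal_le_ofReal ?_)
  rwa [hγ'.integral_comp_snd hInt.aestronglyMeasurable]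

end BlockCoupling

theorem integral_le_integral_of_map_eq {X I : Type*} [MeasurableSpace X] [MeasurableSpace I]
    [Countable I] [MeasurableSingletonClass I] {γ γ' : Measure X}
    [IsFiniteMeasure γ] [IsFiniteMeasure γ'] {Q : X → I} (hQ : Measurable Q)
    (hmap : γ.map Q = γ'.map Q) {S : Set X} (hS : ∀ᵐ p ∂γ, p ∈ S) (hS' : ∀ᵐ p ∂γ', p ∈ S)
    {f h : X → ℝ} (hf : Integrable f γ) (hh : Integrable h γ') {C : ℝ} (hC : ∀ p ∈ S, |f p| ≤ C)
    (hfh : ∀ p ∈ S, ∀ p' ∈ S, Q p = Q p' → f p' ≤ h p) :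
    ∫ p, f p ∂γ ≤ ∫ p, h p ∂γ' := by
  let s : I → ℝ := fun i => sSup (f '' (S ∩ Q ⁻¹' {i}))
  have hbdd : ∀ i, BddAbove (f '' (S ∩ Q ⁻¹' {i})) := fun i =>
    ⟨C, by rintro _ ⟨p, hp, rfl⟩; exact (abs_le.1 (hC p hp.1)).2⟩
  have hfs : ∀ p ∈ S, f p ≤ s (Q p) := fun p hp => le_csSup (hbdd _) ⟨p, ⟨hp, rfl⟩, rfl⟩
  have hs_le : ∀ p ∈ S, ∀ b, (∀ p' ∈ S, Q p = Q p' → f p' ≤ b) → s (Q p) ≤ b := by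
    refine fun p hp b hb => csSup_le ⟨_, p, ⟨hp, rfl⟩, rfl⟩ ?_
    rintro _ ⟨p', hp', rfl⟩
    exact hb p' hp'.1 hp'.2.symm
  have hs_abs : ∀ p ∈ S, |s (Q p)| ≤ C := fun p hp => abs_le.2
    ⟨(abs_le.1 (hC p hp)).1.trans (hfs p hp), hs_le p hp C fun p' hp' _ => (abs_le.1 (hC p' hp')).2⟩
  have hs : Measurable s := Measurable.of_discrete
  have hs_int : ∀ m : Measure X, IsFiniteMeasure m → (∀ᵐ p ∂m, p ∈ S) →
      Integrable (fun p => s (Q p)) m := fun m _ hm =>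
    Integrable.of_bound (hs.comp hQ).aestronglyMeasurable C (hm.mono hs_abs)
  calc ∫ p, f p ∂γ ≤ ∫ p, s (Q p) ∂γ :=
        integral_mono_ae hf (hs_int γ inferInstance hS) (hS.mono hfs)
    _ = ∫ p, s (Q p) ∂γ' := by
        rw [← integral_map hQ.aemeasurable hs.aestronglyMeasurable, hmap,
          integral_map hQ.aemeasurable hs.aestronglyMeasurable]
    _ ≤ ∫ p, h p ∂γ' := integral_mono_ae (hs_int γ' inferInstance hS') hh
        (hS'.mono fun p hp => hs_le p hp _ (hfh p hp))

/-! ### The upper bound -/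

section Grid

variable {E : Type*} [NormedAddCommGroup E] [InnerProductSpace ℝ E] [FiniteDimensional ℝ E]

/-- The `ℓ¹` norm of the coordinates in the standard orthonormal basis. -/
def sumAbsCoord (x : E) : ℝ :=
  ∑ k, |(stdOrthonormalBasis ℝ E).repr x k|

/-- The index of the cell containing `x` of a cubic grid, whose mesh is chosen so that every cell
has `ℓ¹` diameter at most `δ`. -/
def gridCell (δ : ℝ) (x : E) (k : Fin (Module.finrank ℝ E)) : ℤ :=
  ⌊(stdOrthonormalBasis ℝ E).repr x k * ((Module.finrank ℝ E + 1) / δ)⌋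

theorem norm_le_sumAbsCoord (x : E) : ‖x‖ ≤ sumAbsCoord x := by
  conv_lhs => rw [← (stdOrthonormalBasis ℝ E).sum_repr x]
  refine norm_sum_le_of_le _ fun k _ => ?_
  rw [norm_smul, (stdOrthonormalBasis ℝ E).norm_eq_one, mul_one, Real.norm_eq_abs]

theorem measurable_gridCell [MeasurableSpace E] [BorelSpace E] (δ : ℝ) :
    Measurable (gridCell (E := E) δ) :=
  measurable_pi_lambda _ fun k => Int.measurable_floor.comp
    (by fun_prop : Continuous fun x : E => (stdOrthonormalBasis ℝ E).repr x k
      * ((Module.finrank ℝ E + 1) / δ)).measurable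

theorem sumAbsCoord_sub_le_of_gridCell_eq {δ : ℝ} (hδ : 0 < δ) {x x' : E}
    (h : gridCell δ x = gridCell δ x') : sumAbsCoord (x' - x) ≤ δ := by
  set n := Module.finrank ℝ E
  have hcoord : ∀ k, |(stdOrthonormalBasis ℝ E).repr (x' - x) k| ≤ δ / (n + 1) := fun k => by
    have hfloor := Int.abs_sub_lt_one_of_floor_eq_floor (congrFun h k).symm
    rw [← sub_mul, abs_mul, abs_of_pos (by positivity : 0 < (n + 1) / δ)] at hfloor
    rw [map_sub, PiLp.sub_apply, ← one_div_div, le_div_iff₀ (by positivity)]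
    exact hfloor.le
  calc sumAbsCoord (x' - x) ≤ ∑ _k : Fin n, δ / (n + 1) := Finset.sum_le_sum fun k _ => hcoord k
    _ = n * δ / (n + 1) := by
        rw [Finset.sum_const, Finset.card_univ, Fintype.card_fin, nsmul_eq_mul, mul_div_assoc]
    _ ≤ δ := by
        rw [div_le_iff₀ (by positivity)]
        linarith

theorem exists_finset_gridCell_mem {K : Set E} (hK : Bornology.IsBounded K) :
    ∃ C : ℝ, 0 < C ∧ ∀ δ : ℝ, 0 < δ → δ ≤ 1 → ∃ F : Finset (Fin (Module.finrank ℝ E) → ℤ),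
      (∀ x ∈ K, gridCell δ x ∈ F) ∧ log F.card ≤ Module.finrank ℝ E * log (C / δ) := by
  obtain ⟨R, hR_pos, hR⟩ := hK.exists_pos_norm_le
  set n := Module.finrank ℝ E
  refine ⟨2 * (R * (n + 1)) + 3, by positivity, fun δ hδ hδ1 => ?_⟩
  set a : ℝ := (n + 1) / δ with ha
  have ha_pos : 0 < a := by positivity
  set m : ℕ := ⌈R * a⌉₊
  have hm : R * a ≤ m := Nat.le_ceil _
  refine ⟨Fintype.piFinset fun _ => Finset.Icc (-m : ℤ) m, fun x hx => ?_, ?_⟩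
  · refine Fintype.mem_piFinset.2 fun k => ?_
    have hcoord := (PiLp.norm_apply_le ((stdOrthonormalBasis ℝ E).repr x) k).trans
      (((stdOrthonormalBasis ℝ E).repr.norm_map x).trans_le (hR x hx))
    have habs := abs_le.1 hcoord
    rw [Finset.mem_Icc]
    constructor
    · rw [gridCell, Int.le_floor]
      push_cast
      nlinarith
    · have hfloor : (gridCell δ x k : ℝ) ≤ m := (Int.floor_le _).trans (by nlinarith)
      exact_mod_cast hfloor
  · have hcard : ((Fintype.piFinset fun _ : Fin n => Finset.Icc (-m : ℤ) m).card : ℝ)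
        = (2 * m + 1) ^ n := by
      have hIcc : ((m : ℤ) + 1 - -(m : ℤ)).toNat = 2 * m + 1 := by lia
      rw [Fintype.card_piFinset, Finset.prod_const, Int.card_Icc, hIcc, Finset.card_univ,
        Fintype.card_fin]
      push_cast
      ring
    have hRa : R * a * δ = R * (n + 1) := by
      rw [ha]
      field_simp
    rw [hcard, log_pow]
    refine mul_le_mul_of_nonneg_left (log_le_log (by positivity) ?_) (Nat.cast_nonneg _)
    rw [le_div_iff₀ hδ]
    nlinarith [Nat.ceil_lt_add_one (by positivity : 0 ≤ R * a)]

/-- The sum of the second differences of `φ` at `x` along the axes of the grid. -/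
def axisSecondDiff (A : ℝ) (φ : E → ℝ) (δ : ℝ) (x : E) : ℝ :=
  ∑ k, secondDiff A φ (δ • stdOrthonormalBasis ℝ E k) x

theorem continuous_axisSecondDiff (A : ℝ) {φ : E → ℝ} (hφ : Continuous φ) (δ : ℝ) :
    Continuous (axisSecondDiff A φ δ) :=
  continuous_finsetSum _ fun _ _ => continuous_secondDiff A hφ _

theorem Semiconcave.apply_sub_le_axisSecondDiff {A δ e : ℝ} {φ : E → ℝ} (hφ : Semiconcave A φ)
    (hA : 0 ≤ A) {x x' : E} {D : E →L[ℝ] ℝ} (hD : IsApproxSupergradient A e φ x D) (hδ : 0 < δ)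
    (hx : sumAbsCoord (x' - x) ≤ δ) :
    D (x' - x) ≤ φ x' - φ x + axisSecondDiff A φ δ x + e + 4 * A * δ ^ 2 := by
  have hle := hφ.apply_le_of_sum_abs_le hA hD hx hδ
    fun k => ((stdOrthonormalBasis ℝ E).norm_eq_one k).le
  rwa [(stdOrthonormalBasis ℝ E).sum_repr, add_sub_cancel] at hle

theorem exists_integral_axisSecondDiff_le [MeasurableSpace E] [BorelSpace E] {K : Set E}
    (hK : IsCompact K) (A : ℝ) (L M : ℝ≥0) :
    ∃ C : ℝ, ∀ φ : E → ℝ, LipschitzWith L φ → Semiconcave A φ →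
      ∀ μ, HasBoundedDensityOn μ K M →
      ∀ δ : ℝ, 0 < δ → δ ≤ 1 → ∫ x, axisSecondDiff A φ δ x ∂μ ≤ C * δ ^ 2 := by
  obtain ⟨C, hC⟩ := exists_integral_secondDiff_le hK A L M
  refine ⟨Module.finrank ℝ E * C, fun φ hφ hφA μ hμ δ hδ hδ1 => ?_⟩
  have := hμ.isProbabilityMeasure
  have hnorm : ∀ k, ‖δ • stdOrthonormalBasis ℝ E k‖ = δ := fun k => by
    rw [norm_smul, (stdOrthonormalBasis ℝ E).norm_eq_one, mul_one, Real.norm_of_nonneg hδ.le]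
  unfold axisSecondDiff
  rw [integral_finsetSum _ fun k _ => integrable_of_continuousOn_of_ae_mem hK hμ.ae_mem
    (continuous_secondDiff A hφ.continuous _).continuousOn]
  calc ∑ k, ∫ x, secondDiff A φ (δ • stdOrthonormalBasis ℝ E k) x ∂μ
      ≤ ∑ _k : Fin (Module.finrank ℝ E), C * δ ^ 2 := Finset.sum_le_sum fun k _ => by
        simpa only [hnorm] using hC φ hφ hφA μ hμ _ ((hnorm k).trans_le hδ1)
    _ = Module.finrank ℝ E * C * δ ^ 2 := by simp [mul_assoc]

end Grid

theorem exists_cTransform {X Y : Type*} [TopologicalSpace Y] {L : Set Y} (hL : IsCompact L)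
    (hL_ne : L.Nonempty) {f : Y → X → ℝ} (hf : ∀ x, Continuous fun y => f y x) {ψ : Y → ℝ}
    (hψ : ContinuousOn ψ L) :
    ∃ φ : X → ℝ, (∀ x, ∀ y ∈ L, φ x + ψ y ≤ f y x) ∧ ∀ x, ∃ y ∈ L, φ x + ψ y = f y x := by
  choose m hm hmin using fun x => hL.exists_isMinOn hL_ne ((hf x).continuousOn.sub hψ)
  exact ⟨fun x => f (m x) x - ψ (m x), fun x _ hy => le_sub_iff_add_le.1 (hmin x hy),
    fun x => ⟨m x, hm x, sub_add_cancel _ _⟩⟩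

theorem exists_lipschitzWith_semiconcave_cTransform {E Y : Type*} [NormedAddCommGroup E]
    [NormedSpace ℝ E] [TopologicalSpace Y] {L : Set Y} (hL : IsCompact L) (hL_ne : L.Nonempty)
    {f : Y → E → ℝ} (hf : ∀ x, Continuous fun y => f y x) {B : ℝ≥0} {A : ℝ}
    (hfB : ∀ y, LipschitzWith B (f y)) (hfA : ∀ y, Semiconcave A (f y)) {ψ : Y → ℝ}
    (hψ : ContinuousOn ψ L) :
    ∃ φ : E → ℝ, LipschitzWith B φ ∧ Semiconcave A φ ∧ (∀ x, ∀ y ∈ L, φ x + ψ y ≤ f y x) ∧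
      ∀ x, ∃ y ∈ L, φ x + ψ y = f y x := by
  obtain ⟨φ, hφ_le, hφ_eq⟩ := exists_cTransform hL hL_ne hf hψ
  refine ⟨φ, LipschitzWith.of_le_add_mul B fun x' x => ?_, fun x => ?_, hφ_le, hφ_eq⟩
  · obtain ⟨y, hy, hxy⟩ := hφ_eq x
    have hdist := (le_abs_self _).trans ((hfB y).dist_le_mul x' x)
    linarith [hφ_le x' y hy]
  · obtain ⟨y, hy, hxy⟩ := hφ_eq x
    obtain ⟨D, hD⟩ := hfA y x
    have happrox := (hD.sub_const (ψ y)).of_le (φ := φ) fun z => le_sub_iff_add_le.2 (hφ_le z y hy)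
    rw [← hxy, add_sub_cancel_right, sub_self] at happrox
    exact ⟨D, happrox⟩

theorem exists_semiconcave_potentials {E F : Type*} [NormedAddCommGroup E] [NormedSpace ℝ E]
    [NormedAddCommGroup F] [NormedSpace ℝ F] {c : E × F → ℝ} {K : Set E} {L : Set F} {φ₀ : E → ℝ}
    {ψ₀ : F → ℝ} {A : ℝ} (hK : IsCompact K) (hK_ne : K.Nonempty)
    (hL : IsCompact L) (hL_ne : L.Nonempty) {B : ℝ≥0} (hcB : LipschitzWith B c)
    (hcA : ∀ p, ∃ D, IsApproxSupergradient A 0 c p D) (h : IsDualFeasible c K L φ₀ ψ₀) :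
    ∃ φ₁ : E → ℝ, ∃ ψ₁ : F → ℝ, LipschitzWith B φ₁ ∧ LipschitzWith B ψ₁ ∧
      Semiconcave A φ₁ ∧ Semiconcave A ψ₁ ∧
      (∀ x, ∀ y ∈ L, φ₁ x + ψ₀ y ≤ c (x, y)) ∧ (∀ y, ∀ x ∈ K, ψ₁ y + φ₀ x ≤ c (x, y)) ∧
      (∀ x ∈ K, φ₀ x ≤ φ₁ x) ∧ ∀ y ∈ L, ψ₀ y ≤ ψ₁ y := by
  have hc := hcB.continuous
  obtain ⟨φ₁, hφ₁B, hφ₁A, hφ₁_le, hφ₁_eq⟩ :=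
    exists_lipschitzWith_semiconcave_cTransform hL hL_ne (f := fun y x => c (x, y))
      (fun x => by fun_prop) (fun y => mul_one B ▸ hcB.comp (LipschitzWith.prodMk_right y))
      (fun y x => (hcA (x, y)).imp' _ fun _ hD => hD.comp_prodMk_right) h.continuousOn_right
  obtain ⟨ψ₁, hψ₁B, hψ₁A, hψ₁_le, hψ₁_eq⟩ :=
    exists_lipschitzWith_semiconcave_cTransform hK hK_ne (f := fun x y => c (x, y))
      (fun y => by fun_prop) (fun x => mul_one B ▸ hcB.comp (LipschitzWith.prodMk_left x))
      (fun x y => (hcA (x, y)).imp' _ fun _ hD => hD.comp_prodMk_left) h.continuousOn_left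
  refine ⟨φ₁, ψ₁, hφ₁B, hψ₁B, hφ₁A, hψ₁A, hφ₁_le, hψ₁_le, fun x hx => ?_, fun y hy => ?_⟩
  · obtain ⟨y, hy, hxy⟩ := hφ₁_eq x
    linarith [h.add_le x hx y hy]
  · obtain ⟨x, hx, hxy⟩ := hψ₁_eq y
    linarith [h.add_le x hx y hy]

theorem integral_mul_add_sub {X : Type*} [MeasurableSpace X] {μ : Measure X} {f g h : X → ℝ}
    (a : ℝ) (hf : Integrable f μ) (hg : Integrable g μ) (hh : Integrable h μ) :
    ∫ x, (a * f x + g x - h x) ∂μ = a * ∫ x, f x ∂μ + ∫ x, g x ∂μ - ∫ x, h x ∂μ := by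
  have haf := hf.const_mul a
  have hafg : Integrable (fun x => a * f x + g x) μ := haf.add hg
  rw [integral_sub hafg hh, MeasureTheory.integral_add haf hg, integral_const_mul]

section BlockApproximation

variable {E F : Type*} [NormedAddCommGroup E] [InnerProductSpace ℝ E] [FiniteDimensional ℝ E]
  [NormedAddCommGroup F] [InnerProductSpace ℝ F] [FiniteDimensional ℝ F]
  {c : E × F → ℝ} {K : Set E} {L : Set F} {φ₀ φ₁ : E → ℝ} {ψ₀ ψ₁ : F → ℝ} {A δ : ℝ}

/- The derivative of `c` at `(x, y)` is an approximate supergradient of `φ₁` and of `ψ₁`, up to the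
duality gaps at `(x, y)`, so that `φ₁` and `ψ₁` absorb the first order variation of the cost. -/
theorem cost_sub_potentials_le (hA : 0 ≤ A) {x x' : E} {y y' : F} {D : E × F →L[ℝ] ℝ}
    (hD : IsApproxSupergradient A 0 c (x, y) D) (hφ : Semiconcave A φ₁) (hψ : Semiconcave A ψ₁)
    (hφ_le : ∀ z, φ₁ z + ψ₀ y ≤ c (z, y)) (hψ_le : ∀ z, ψ₁ z + φ₀ x ≤ c (x, z)) (hδ : 0 < δ)
    (hx : sumAbsCoord (x' - x) ≤ δ) (hy : sumAbsCoord (y' - y) ≤ δ) :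
    c (x', y') - (φ₁ x' + ψ₁ y')
      ≤ 3 * c (x, y) + 9 * A * δ ^ 2 - ((2 * φ₁ x + φ₀ x - axisSecondDiff A φ₁ δ x)
        + (2 * ψ₁ y + ψ₀ y - axisSecondDiff A ψ₁ δ y)) := by
  have hDφ := hφ.apply_sub_le_axisSecondDiff hA
    ((hD.comp_prodMk_right.sub_const (ψ₀ y)).of_le fun z => le_sub_iff_add_le.2 (hφ_le z)) hδ hx
  have hDψ := hψ.apply_sub_le_axisSecondDiff hA
    ((hD.comp_prodMk_left.sub_const (φ₀ x)).of_le fun z => le_sub_iff_add_le.2 (hψ_le z)) hδ hy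
  have hc := hD (x', y')
  have hDadd : D ((x', y') - (x, y))
      = D.comp (.inl ℝ E F) (x' - x) + D.comp (.inr ℝ E F) (y' - y) := by
    simp [← map_add]
  have hnorm : ‖(x', y') - (x, y)‖ ≤ δ :=
    max_le ((norm_le_sumAbsCoord _).trans hx) ((norm_le_sumAbsCoord _).trans hy)
  have hsq : A * ‖(x', y') - (x, y)‖ ^ 2 ≤ A * δ ^ 2 := by gcongr
  linarith

variable [MeasurableSpace E] [BorelSpace E] [MeasurableSpace F] [BorelSpace F]
  {I J : Type*} [MeasurableSpace I] [Countable I] [MeasurableSingletonClass I]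
  [MeasurableSpace J] [Countable J] [MeasurableSingletonClass J]
  {μ : Measure E} {ν : Measure F} [IsProbabilityMeasure μ] [IsProbabilityMeasure ν]
  {γ γ₀ : Measure (E × F)} {Q : E → I} {Q' : F → J}

theorem IsCoupling.integral_add_le_of_map_eq (hγ : IsCoupling γ μ ν) (hγ₀ : IsCoupling γ₀ μ ν)
    (hK : IsCompact K) (hL : IsCompact L) (hμ : ∀ᵐ x ∂μ, x ∈ K) (hν : ∀ᵐ y ∂ν, y ∈ L)
    (hc : Continuous c) (hA : 0 ≤ A) (hcA : ∀ p, ∃ D, IsApproxSupergradient A 0 c p D)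
    (hφ₀ : ContinuousOn φ₀ K) (hψ₀ : ContinuousOn ψ₀ L) (hφ₁ : Continuous φ₁)
    (hψ₁ : Continuous ψ₁) (hφ₁A : Semiconcave A φ₁) (hψ₁A : Semiconcave A ψ₁)
    (hφ₁_le : ∀ x, ∀ y ∈ L, φ₁ x + ψ₀ y ≤ c (x, y))
    (hψ₁_le : ∀ y, ∀ x ∈ K, ψ₁ y + φ₀ x ≤ c (x, y)) (hδ : 0 < δ) (hQ : Measurable Q)
    (hQ' : Measurable Q') (hQδ : ∀ x x', Q x = Q x' → sumAbsCoord (x' - x) ≤ δ)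
    (hQδ' : ∀ y y', Q' y = Q' y' → sumAbsCoord (y' - y) ≤ δ)
    (hmap : γ.map (Prod.map Q Q') = γ₀.map (Prod.map Q Q')) :
    ∫ p, c p ∂γ + (∫ x, φ₁ x ∂μ + ∫ y, ψ₁ y ∂ν) + (∫ x, φ₀ x ∂μ + ∫ y, ψ₀ y ∂ν)
      ≤ 3 * ∫ p, c p ∂γ₀ + 9 * A * δ ^ 2
        + (∫ x, axisSecondDiff A φ₁ δ x ∂μ + ∫ y, axisSecondDiff A ψ₁ δ y ∂ν) := by
  have := hγ.isProbabilityMeasure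
  have := hγ₀.isProbabilityMeasure
  have hintμ : ∀ {f : E → ℝ}, ContinuousOn f K → Integrable f μ :=
    integrable_of_continuousOn_of_ae_mem hK hμ
  have hintν : ∀ {f : F → ℝ}, ContinuousOn f L → Integrable f ν :=
    integrable_of_continuousOn_of_ae_mem hL hν
  have hcγ := hγ.integrable_of_continuous hK hL hμ hν hc
  have hcγ₀ := hγ₀.integrable_of_continuous hK hL hμ hν hc
  have hφ₁_int := hintμ hφ₁.continuousOn
  have hψ₁_int := hintν hψ₁.continuousOn
  have hS := hintμ (continuous_axisSecondDiff A hφ₁ δ).continuousOn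
  have hS' := hintν (continuous_axisSecondDiff A hψ₁ δ).continuousOn
  have hcA_int := (hcγ₀.const_mul 3).add (integrable_const (9 * A * δ ^ 2))
  have hφ_int := ((hφ₁_int.const_mul 2).add (hintμ hφ₀)).sub hS
  have hψ_int := ((hψ₁_int.const_mul 2).add (hintν hψ₀)).sub hS'
  obtain ⟨G, hG⟩ := (hK.prod hL).exists_bound_of_continuousOn
    (by fun_prop : Continuous fun p : E × F => c p - (φ₁ p.1 + ψ₁ p.2)).continuousOn
  have hle := integral_le_integral_of_map_eq (hQ.prodMap hQ') hmap (hγ.ae_mem_prod hμ hν)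
    (hγ₀.ae_mem_prod hμ hν) (hcγ.sub (hγ.integrable_add hφ₁_int hψ₁_int))
    (hcA_int.sub (hγ₀.integrable_add hφ_int hψ_int)) hG fun p hp p' _ hpp' => by
      obtain ⟨D, hD⟩ := hcA p
      exact cost_sub_potentials_le hA hD hφ₁A hψ₁A (fun z => hφ₁_le z _ hp.2)
        (fun z => hψ₁_le z _ hp.1) hδ (hQδ _ _ (congrArg Prod.fst hpp'))
        (hQδ' _ _ (congrArg Prod.snd hpp'))
  have hlhs := hγ.integral_sub_add hcγ hφ₁_int hψ₁_int
  have hrhs := hγ₀.integral_sub_add hcA_int hφ_int hψ_int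
  simp only [Pi.add_apply, Pi.sub_apply, integral_mul_add_sub 2 hφ₁_int (hintμ hφ₀) hS,
    integral_mul_add_sub 2 hψ₁_int (hintν hψ₀) hS',
    MeasureTheory.integral_add (hcγ₀.const_mul 3) (integrable_const _), integral_const_mul,
    integral_const, probReal_univ, one_smul] at hle hrhs
  linarith

theorem exists_integral_add_le_of_map_gridCell_eq (hc : ContDiff ℝ 2 c) (hs : HasCompactSupport c)
    (hK : IsCompact K) (hL : IsCompact L) (M N : ℝ≥0) :
    ∃ C : ℝ, ∀ μ ν, HasBoundedDensityOn μ K M → HasBoundedDensityOn ν L N →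
      ∀ φ ψ, IsDualFeasible c K L φ ψ → ∀ δ : ℝ, 0 < δ → δ ≤ 1 →
      ∀ γ γ₀, IsCoupling γ μ ν → IsCoupling γ₀ μ ν →
      γ.map (Prod.map (gridCell δ) (gridCell δ)) = γ₀.map (Prod.map (gridCell δ) (gridCell δ)) →
      ∫ p, c p ∂γ + 2 * (∫ x, φ x ∂μ + ∫ y, ψ y ∂ν) ≤ 3 * ∫ p, c p ∂γ₀ + C * δ ^ 2 := by
  obtain ⟨A, hA, hcA⟩ := exists_isApproxSupergradient_fderiv hc hs
  obtain ⟨B, hB⟩ := (hc.of_le one_le_two).lipschitzWith_of_hasCompactSupport hs one_ne_zero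
  obtain ⟨C₁, hC₁⟩ := exists_integral_axisSecondDiff_le hK A B M
  obtain ⟨C₂, hC₂⟩ := exists_integral_axisSecondDiff_le hL A B N
  refine ⟨9 * A + C₁ + C₂, fun μ ν hμ hν φ ψ h δ hδ hδ1 γ γ₀ hγ hγ₀ hmap => ?_⟩
  have := hμ.isProbabilityMeasure
  have := hν.isProbabilityMeasure
  obtain ⟨φ₁, ψ₁, hφ₁B, hψ₁B, hφ₁A, hψ₁A, hφ₁_le, hψ₁_le, hφ_le, hψ_le⟩ :=
    exists_semiconcave_potentials hK hμ.ae_mem.exists hL hν.ae_mem.exists hB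
      (fun p => ⟨_, hcA p⟩) h
  have hle := hγ.integral_add_le_of_map_eq hγ₀ hK hL hμ.ae_mem hν.ae_mem hc.continuous hA
    (fun p => ⟨_, hcA p⟩) h.continuousOn_left h.continuousOn_right hφ₁B.continuous
    hψ₁B.continuous hφ₁A hψ₁A hφ₁_le hψ₁_le hδ (measurable_gridCell δ) (measurable_gridCell δ)
    (fun _ _ => sumAbsCoord_sub_le_of_gridCell_eq hδ)
    (fun _ _ => sumAbsCoord_sub_le_of_gridCell_eq hδ) hmap
  have hφ_int : ∫ x, φ x ∂μ ≤ ∫ x, φ₁ x ∂μ := integral_mono_ae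
    (integrable_of_continuousOn_of_ae_mem hK hμ.ae_mem h.continuousOn_left)
    (integrable_of_continuousOn_of_ae_mem hK hμ.ae_mem hφ₁B.continuous.continuousOn)
    (hμ.ae_mem.mono hφ_le)
  have hψ_int : ∫ y, ψ y ∂ν ≤ ∫ y, ψ₁ y ∂ν := integral_mono_ae
    (integrable_of_continuousOn_of_ae_mem hL hν.ae_mem h.continuousOn_right)
    (integrable_of_continuousOn_of_ae_mem hL hν.ae_mem hψ₁B.continuous.continuousOn)
    (hν.ae_mem.mono hψ_le)
  linarith [hC₁ φ₁ hφ₁B hφ₁A μ hμ δ hδ hδ1, hC₂ ψ₁ hψ₁B hψ₁A ν hν δ hδ hδ1]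

theorem exists_isCoupling_integral_add_klDiv_le (hc : ContDiff ℝ 2 c) (hs : HasCompactSupport c)
    (hK : IsCompact K) (hL : IsCompact L) (M N : ℝ≥0) :
    ∃ C : ℝ, ∀ μ ν, HasBoundedDensityOn μ K M → HasBoundedDensityOn ν L N →
      ∀ φ ψ, IsDualFeasible c K L φ ψ → ∀ γ₀, IsCoupling γ₀ μ ν → ∀ ε : ℝ, 0 < ε → ε ≤ 1 →
      ∫ p, c p ∂γ₀ ≤ ∫ x, φ x ∂μ + ∫ y, ψ y ∂ν + ε →
      ∃ γ, IsCoupling γ μ ν ∧ klDiv γ (μ.prod ν) ≠ ∞ ∧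
        ∫ p, c p ∂γ + ε * (klDiv γ (μ.prod ν)).toReal
          ≤ ∫ p, c p ∂γ₀ + Module.finrank ℝ F / 2 * (ε * log (1 / ε)) + C * ε := by
  obtain ⟨C₁, hC₁⟩ := exists_integral_add_le_of_map_gridCell_eq hc hs hK hL M N
  obtain ⟨R, hR, hgrid⟩ := exists_finset_gridCell_mem hL.isBounded
  refine ⟨2 + C₁ + Module.finrank ℝ F * log R,
    fun μ ν hμ hν φ ψ h γ₀ hγ₀ ε hε hε1 hgap => ?_⟩
  have := hμ.isProbabilityMeasure
  have := hν.isProbabilityMeasure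
  have hδ := sqrt_pos.2 hε
  have hδ1 := sqrt_le_one.2 hε1
  have hQ := measurable_gridCell (E := E) (√ε)
  have hQ' := measurable_gridCell (E := F) (√ε)
  obtain ⟨S, hS, hS_card⟩ := hgrid _ hδ hδ1
  have hγ := isCoupling_blockCoupling hγ₀ hQ hQ'
  have hkl := hγ₀.klDiv_blockCoupling_le hQ hQ' (hν.ae_mem.mono hS)
  have hcost := hC₁ μ ν hμ hν φ ψ h _ hδ hδ1 _ _ hγ hγ₀ (hγ₀.map_blockCoupling hQ hQ')
  refine ⟨_, hγ, ne_top_of_le_ne_top ENNReal.ofReal_ne_top hkl, ?_⟩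
  have hlog : log (R / √ε) = log R + 1 / 2 * log (1 / ε) := by
    rw [log_div hR.ne' hδ.ne', log_sqrt hε.le, one_div ε, log_inv]
    ring
  have hentropy := mul_le_mul_of_nonneg_left
    ((ENNReal.toReal_le_of_le_ofReal (log_natCast_nonneg _) hkl).trans (hS_card.trans_eq
      (congrArg _ hlog))) hε.le
  rw [sq_sqrt hε.le] at hcost
  linarith

end BlockApproximation

/-! ### First order expansion of the entropic cost -/

theorem exists_contDiff_hasCompactSupport_eventuallyEq {V : Type*} [NormedAddCommGroup V]
    [NormedSpace ℝ V] [FiniteDimensional ℝ V] {K U : Set V} (hK : IsCompact K) (hU : IsOpen U)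
    (hKU : K ⊆ U) {n : ℕ∞} {f : V → ℝ} (hf : ContDiffOn ℝ n f U) :
    ∃ g : V → ℝ, ContDiff ℝ n g ∧ HasCompactSupport g ∧ ∀ x ∈ K, g =ᶠ[𝓝 x] f := by
  obtain ⟨χ, hχ, hχ_supp, hχU, -, hχK⟩ := exists_contDiff_cutoff hK hU hKU n
  refine ⟨χ * f, (contMDiff_of_tsupport fun x hx => ?_).contDiff, hχ_supp.mul_right,
    fun x hx => ?_⟩
  · have hxU := hχU (closure_mono (Function.support_mul_subset_left χ f) hx)
    exact (hχ.contDiffAt.mul (hf.contDiffAt (hU.mem_nhds hxU))).contMDiffAt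
  · filter_upwards [hχK x hx] with z hz
    simp [hz]

section Expansion

variable {E : Type*} [NormedAddCommGroup E] [InnerProductSpace ℝ E] [FiniteDimensional ℝ E]
  [MeasurableSpace E] [BorelSpace E] {c : E × E → ℝ} {K L : Set E}

theorem exists_abs_entCost_sub_le (hc : ContDiff ℝ 2 c) (hs : HasCompactSupport c)
    (hK : IsCompact K) (hL : IsCompact L)
    (htwist : ∀ p ∈ K ×ˢ L, Function.Injective (mixedFDeriv c p)) (M N : ℝ≥0) :
    ∃ C : ℝ, 0 ≤ C ∧ ∀ μ ν, HasBoundedDensityOn μ K M → HasBoundedDensityOn ν L N →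
      ∀ ε ∈ Ioo (0 : ℝ) 1, |(entCost μ ν c ε).toReal - (entCost μ ν c 0).toReal
        - Module.finrank ℝ E / 2 * (ε * log (1 / ε))| ≤ C * ε := by
  obtain ⟨C₁, hC₁⟩ :=
    (gibbsBound_of_isCompact hc hK hL htwist).exists_le_integral_add_klDiv hc.continuous hK hL M N
  obtain ⟨C₂, hC₂⟩ := exists_isCoupling_integral_add_klDiv_le hc hs hK hL M N
  refine ⟨max C₁ C₂ ⊔ 0, le_max_right _ _, fun μ ν hμ hν ε ⟨hε, hε1⟩ => ?_⟩
  have := hμ.isProbabilityMeasure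
  have := hν.isProbabilityMeasure
  obtain ⟨γ₀, hγ₀, hdual⟩ := exists_isCoupling_forall_integral_le_isDualFeasible_add hK hL
    hμ.ae_mem hν.ae_mem hc.continuous
  have hzero : entCost μ ν c 0 = ((∫ p, c p ∂γ₀ : ℝ) : EReal) :=
    entCost_zero hγ₀ fun γ hγ => le_of_forall_pos_le_add fun η hη => by
      obtain ⟨φ, ψ, h, hgap⟩ := hdual η hη
      linarith [h.integral_add_le hγ hK hL hμ.ae_mem hν.ae_mem hc.continuous]
  have hlower : ((∫ p, c p ∂γ₀ + Module.finrank ℝ E / 2 * (ε * log (1 / ε)) - C₁ * ε : ℝ) : EReal)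
      ≤ entCost μ ν c ε :=
    le_entCost hε fun γ hγ hfin => le_of_forall_pos_le_add fun η hη => by
      obtain ⟨φ, ψ, h, hgap⟩ := hdual η hη
      linarith [hC₁ μ ν hμ hν φ ψ h γ hγ hfin ε hε]
  obtain ⟨φ, ψ, h, hgap⟩ := hdual ε hε
  obtain ⟨γ, hγ, hfin, hle⟩ := hC₂ μ ν hμ hν φ ψ h γ₀ hγ₀ ε hε hε1.le hgap
  have hupper := (entCost_le (c := c) (ε := ε) hγ hfin).trans (EReal.coe_le_coe_iff.2 hle)
  have hcoe : ((entCost μ ν c ε).toReal : EReal) = entCost μ ν c ε :=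
    EReal.coe_toReal (ne_top_of_le_ne_top (EReal.coe_ne_top _) hupper)
      (ne_bot_of_le_ne_bot (EReal.coe_ne_bot _) hlower)
  rw [← hcoe, EReal.coe_le_coe_iff] at hlower hupper
  have hC₁ε : C₁ * ε ≤ (max C₁ C₂ ⊔ 0) * ε := by gcongr; simp
  have hC₂ε : C₂ * ε ≤ (max C₁ C₂ ⊔ 0) * ε := by gcongr; simp
  rw [hzero, EReal.toReal_coe, abs_le]
  constructor <;> linarith

theorem exists_abs_entCost_sub_le_of_contDiffOn {U : Set (E × E)} (hU : IsOpen U)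
    (hK : IsCompact K) (hL : IsCompact L) (hKL : K ×ˢ L ⊆ U) (hc : ContDiffOn ℝ 2 c U)
    (htwist : ∀ p ∈ K ×ˢ L, Function.Injective (mixedFDeriv c p)) (M N : ℝ≥0) :
    ∃ C : ℝ, 0 ≤ C ∧ ∀ μ ν, HasBoundedDensityOn μ K M → HasBoundedDensityOn ν L N →
      ∀ ε ∈ Ioo (0 : ℝ) 1, |(entCost μ ν c ε).toReal - (entCost μ ν c 0).toReal
        - Module.finrank ℝ E / 2 * (ε * log (1 / ε))| ≤ C * ε := by
  obtain ⟨c', hc', hs, hcc'⟩ := exists_contDiff_hasCompactSupport_eventuallyEq (n := 2)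
    (hK.prod hL) hU hKL hc
  obtain ⟨C, hC, hexp⟩ := exists_abs_entCost_sub_le hc' hs hK hL (fun p hp => by
    rw [mixedFDeriv, (hcc' p hp).fderiv.fderiv_eq]
    exact htwist p hp) M N
  refine ⟨C, hC, fun μ ν hμ hν ε hε => ?_⟩
  have hcongr : EqOn c c' (K ×ˢ L) := fun p hp => (hcc' p hp).eq_of_nhds.symm
  rw [entCost_congr hμ.ae_mem hν.ae_mem hcongr, entCost_congr hμ.ae_mem hν.ae_mem hcongr]
  exact hexp μ ν hμ hν ε hε

end Expansion

theorem le_toNNReal_smul_of_rnDeriv_le {α : Type*} [MeasurableSpace α] {μ ν : Measure α}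
    [μ.HaveLebesgueDecomposition ν] (hac : μ ≪ ν) {C : ℝ≥0∞} (hC : C ≠ ∞)
    (hle : ∀ᵐ x ∂ν, μ.rnDeriv ν x ≤ C) : μ ≤ C.toNNReal • ν :=
  calc μ = ν.withDensity (μ.rnDeriv ν) := (Measure.withDensity_rnDeriv_eq _ _ hac).symm
    _ ≤ ν.withDensity fun _ => C := withDensity_mono hle
    _ = C.toNNReal • ν := by
      rw [withDensity_const, ← ENNReal.coe_toNNReal hC]
      rfl

theorem exists_hasBoundedDensityOn {E : Type*} [NormedAddCommGroup E] [InnerProductSpace ℝ E]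
    [FiniteDimensional ℝ E] [MeasurableSpace E] [BorelSpace E] {μ : Measure E}
    [IsProbabilityMeasure μ] {K : Set E} (hK : μ Kᶜ = 0) (hac : μ ≪ volume)
    (hbd : ∃ C : ℝ≥0∞, C ≠ ⊤ ∧ ∀ᵐ x ∂volume, μ.rnDeriv volume x ≤ C) :
    ∃ M, HasBoundedDensityOn μ K M := by
  obtain ⟨C, hC, hle⟩ := hbd
  exact ⟨C.toNNReal, inferInstance, mem_ae_iff.2 hK, le_toNNReal_smul_of_rnDeriv_le hac hC hle⟩

section CrossDeriv

variable {d : ℕ} {c : EuclideanSpace ℝ (Fin d) × EuclideanSpace ℝ (Fin d) → ℝ}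
  {x y : EuclideanSpace ℝ (Fin d)}

theorem crossDeriv_eq_mixedFDeriv (hc : ContDiffAt ℝ 2 c (x, y)) (i j : Fin d) :
    crossDeriv c x y i j
      = mixedFDeriv c (x, y) (EuclideanSpace.single j 1) (EuclideanSpace.single i 1) := by
  have hpartial : (fun y' => fderiv ℝ (fun x' => c (x', y')) x (EuclideanSpace.single i 1))
      =ᶠ[𝓝 y] fun y' => fderiv ℝ c (x, y') (EuclideanSpace.single i 1, 0) := by
    filter_upwards [(Continuous.prodMk_right x).continuousAt.eventually
      (hc.eventually (by norm_num))] with y' hy'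
    have hcomp := (hy'.differentiableAt two_ne_zero).hasFDerivAt.comp x
      (hasFDerivAt_prodMk_left (𝕜 := ℝ) x y')
    exact congrFun (congrArg DFunLike.coe hcomp.fderiv) _
  have hderiv := ((((hc.fderiv_right (m := 1) (by norm_num)).differentiableAt
    one_ne_zero).hasFDerivAt.comp y (hasFDerivAt_prodMk_right x y)).clm_apply
      (hasFDerivAt_const (EuclideanSpace.single i (1 : ℝ), (0 : EuclideanSpace ℝ (Fin d))) y))
  rw [crossDeriv, Matrix.of_apply, hpartial.fderiv_eq]
  refine (congrFun (congrArg DFunLike.coe hderiv.fderiv) _).trans ?_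
  simp [mixedFDeriv]

theorem crossDeriv_mulVec (hc : ContDiffAt ℝ 2 c (x, y)) (k : EuclideanSpace ℝ (Fin d))
    (i : Fin d) :
    (crossDeriv c x y).mulVec k i = mixedFDeriv c (x, y) k (EuclideanSpace.single i 1) := by
  conv_rhs => rw [← (EuclideanSpace.basisFun (Fin d) ℝ).sum_repr k]
  simp [Matrix.mulVec, dotProduct, crossDeriv_eq_mixedFDeriv hc, mul_comm]

theorem injective_mixedFDeriv_of_det_crossDeriv_ne_zero (hc : ContDiffAt ℝ 2 c (x, y))
    (hdet : (crossDeriv c x y).det ≠ 0) : Function.Injective (mixedFDeriv c (x, y)) := by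
  refine (injective_iff_map_eq_zero _).2 fun k hk => WithLp.ofLp_injective 2 ?_
  exact Matrix.eq_zero_of_mulVec_eq_zero hdet (funext fun i => by simp [crossDeriv_mulVec hc, hk])

end CrossDeriv

theorem sinkhorn_divergence_rate_general {d : ℕ}
    (Ω : Set (EuclideanSpace ℝ (Fin d))) (hΩo : IsOpen Ω)
    (μm μp : Measure (EuclideanSpace ℝ (Fin d)))
    [IsProbabilityMeasure μm] [IsProbabilityMeasure μp]
    (hsm : ∃ K, IsCompact K ∧ K ⊆ Ω ∧ μm Kᶜ = 0)
    (hsp : ∃ K, IsCompact K ∧ K ⊆ Ω ∧ μp Kᶜ = 0)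
    (hacm : μm ≪ volume) (hacp : μp ≪ volume)
    (hbdm : ∃ C : ℝ≥0∞, C ≠ ⊤ ∧ ∀ᵐ x ∂volume, μm.rnDeriv volume x ≤ C)
    (hbdp : ∃ C : ℝ≥0∞, C ≠ ⊤ ∧ ∀ᵐ x ∂volume, μp.rnDeriv volume x ≤ C)
    (c : EuclideanSpace ℝ (Fin d) × EuclideanSpace ℝ (Fin d) → ℝ)
    (hc : ContDiffOn ℝ 2 c (Ω ×ˢ Ω))
    (htwist : ∀ x ∈ Ω, ∀ y ∈ Ω, (crossDeriv c x y).det ≠ 0) :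
    ∃ C : ℝ, 0 ≤ C ∧ ∀ ε ∈ Set.Ioo (0 : ℝ) 1,
      |((entCost μm μp c ε).toReal
            - (1 / 2) * ((entCost μm μm c ε).toReal + (entCost μp μp c ε).toReal))
        - ((entCost μm μp c 0).toReal
            - (1 / 2) * ((entCost μm μm c 0).toReal + (entCost μp μp c 0).toReal))|
        ≤ C * ε := by
  obtain ⟨K, hK, hKΩ, hμmK⟩ := hsm
  obtain ⟨L, hL, hLΩ, hμpL⟩ := hsp
  obtain ⟨M, hμm⟩ := exists_hasBoundedDensityOn hμmK hacm hbdm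
  obtain ⟨N, hμp⟩ := exists_hasBoundedDensityOn hμpL hacp hbdp
  have hΩ := hΩo.prod hΩo
  have hinj : ∀ p ∈ Ω ×ˢ Ω, Function.Injective (mixedFDeriv c p) := fun p hp =>
    injective_mixedFDeriv_of_det_crossDeriv_ne_zero (hc.contDiffAt (hΩ.mem_nhds hp))
      (htwist _ hp.1 _ hp.2)
  obtain ⟨Cmp, hCmp, hmp⟩ := exists_abs_entCost_sub_le_of_contDiffOn hΩ hK hL
    (prod_mono hKΩ hLΩ) hc (fun p hp => hinj p (prod_mono hKΩ hLΩ hp)) M N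
  obtain ⟨Cmm, hCmm, hmm⟩ := exists_abs_entCost_sub_le_of_contDiffOn hΩ hK hK
    (prod_mono hKΩ hKΩ) hc (fun p hp => hinj p (prod_mono hKΩ hKΩ hp)) M M
  obtain ⟨Cpp, hCpp, hpp⟩ := exists_abs_entCost_sub_le_of_contDiffOn hΩ hL hL
    (prod_mono hLΩ hLΩ) hc (fun p hp => hinj p (prod_mono hLΩ hLΩ hp)) N N
  refine ⟨Cmp + Cmm + Cpp, by positivity, fun ε hε => abs_le.2 ?_⟩
  have hmpε := abs_le.1 (hmp μm μp hμm hμp ε hε)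
  have hmmε := abs_le.1 (hmm μm μm hμm hμm ε hε)
  have hppε := abs_le.1 (hpp μp μp hμp hμp ε hε)
  constructor <;> linarith

/-- **Sinkhorn divergence expansion**: for an infinitesimally twisted `C²` cost on an open
convex set and compactly supported marginals with `L^∞` densities, the Sinkhorn divergence
`OT_ε = v_ε(μ⁻,μ⁺) - (v_ε(μ⁻,μ⁻) + v_ε(μ⁺,μ⁺))/2` satisfies
`|OT_ε - OT₀| ≤ C ε` for `ε ∈ (0,1)`: the `ε log(1/ε)` term cancels. -/
theorem sinkhorn_divergence_rate {d : ℕ}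
    (Ω : Set (EuclideanSpace ℝ (Fin d))) (hΩo : IsOpen Ω) (hΩc : Convex ℝ Ω)
    (μm μp : Measure (EuclideanSpace ℝ (Fin d)))
    [IsProbabilityMeasure μm] [IsProbabilityMeasure μp]
    (hsm : ∃ K, IsCompact K ∧ K ⊆ Ω ∧ μm Kᶜ = 0)
    (hsp : ∃ K, IsCompact K ∧ K ⊆ Ω ∧ μp Kᶜ = 0)
    (hacm : μm ≪ volume) (hacp : μp ≪ volume)
    (hbdm : ∃ C : ℝ≥0∞, C ≠ ⊤ ∧ ∀ᵐ x ∂volume, μm.rnDeriv volume x ≤ C)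
    (hbdp : ∃ C : ℝ≥0∞, C ≠ ⊤ ∧ ∀ᵐ x ∂volume, μp.rnDeriv volume x ≤ C)
    (c : EuclideanSpace ℝ (Fin d) × EuclideanSpace ℝ (Fin d) → ℝ)
    (hc : ContDiffOn ℝ 2 c (Ω ×ˢ Ω))
    (htwist : ∀ x ∈ Ω, ∀ y ∈ Ω, (crossDeriv c x y).det ≠ 0) :
    ∃ C : ℝ, 0 ≤ C ∧ ∀ ε ∈ Set.Ioo (0 : ℝ) 1,
      |((entCost μm μp c ε).toReal
            - (1 / 2) * ((entCost μm μm c ε).toReal + (entCost μp μp c ε).toReal))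
        - ((entCost μm μp c 0).toReal
            - (1 / 2) * ((entCost μm μm c 0).toReal + (entCost μp μp c 0).toReal))|
        ≤ C * ε := by
  exact sinkhorn_divergence_rate_general Ω hΩo μm μp hsm hsp hacm hacp hbdm hbdp c hc htwist
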